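/- arXiv:math/0109006 — 11 statements merged into one kernel-verified Lean document; each statement's English description precedes it below -/
import Mathlib

section
/- Let A be a nonzero unital associative algebra over ℂ and let λ ∈ ℂ. If there exist idempotents q₁, q₂, q₃ ∈ A with q₁ + q₂ + q₃ = λ·1, then λ ∈ {0, 1, 3/2, 2, 3}. -/
/-! Let `a`, `b`, `c` be idempotents with sum `l • 1`. Idempotency of `c = l • 1 - a - b` expresses
the anticommutator `a * b + b * a` affinely in `a + b`. Bracketing both sides with `a` gives
`⁅a, b⁆` on the left and `(2 * (l - 1)) • ⁅a, b⁆` on the right, so `(2 * l - 3) • ⁅a, b⁆ = 0`.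
Over a domain, either `2 * l = 3` or the idempotents commute, and then left multiplication by them
has a common eigenvector, whose eigenvalues are `0` or `1` and add up to `l`. -/

lemma exists_sum_smul_eq_nsmul_of_commuting_idempotents {ι A M : Type*} [Semiring A]
    [AddCommMonoid M] [Module A M] [Nontrivial M] {q : ι → A} (s : Finset ι)
    (hq : ∀ i ∈ s, IsIdempotentElem (q i))
    (hcomm : (s : Set ι).Pairwise fun i j ↦ Commute (q i) (q j)) :
    ∃ w : M, w ≠ 0 ∧ ∃ k ≤ s.card, (∑ i ∈ s, q i) • w = k • w := by
  classical
  induction s using Finset.induction_on with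
  | empty =>
    obtain ⟨w, hw⟩ := exists_ne (0 : M)
    exact ⟨w, hw, 0, le_rfl, by simp⟩
  | insert i s hi ih =>
    obtain ⟨w, hw, k, hk, hsw⟩ := ih (fun j hj ↦ hq j (Finset.mem_insert_of_mem hj))
      (hcomm.mono (by simp))
    rw [Finset.card_insert_of_notMem hi, Finset.sum_insert hi]
    by_cases hiw : q i • w = 0
    · exact ⟨w, hw, k, by lia, by rw [add_smul, hiw, hsw, zero_add]⟩
    · have hsi : Commute (∑ j ∈ s, q j) (q i) := Commute.sum_left _ _ _ fun j hj ↦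
        hcomm (by simp [hj]) (by simp) (ne_of_mem_of_not_mem hj hi)
      have hii : q i * q i = q i := hq i (Finset.mem_insert_self i s)
      refine ⟨q i • w, hiw, k + 1, by lia, ?_⟩
      calc (q i + ∑ j ∈ s, q j) • q i • w
          = q i • w + q i • (∑ j ∈ s, q j) • w := by
            rw [add_smul, smul_smul, hii, smul_smul, hsi.eq, ← smul_smul]
        _ = (k + 1) • q i • w := by rw [hsw, smul_comm, succ_nsmul']

lemma lie_mul_add_mul_of_isIdempotentElem {A : Type*} [NonUnitalRing A] {a : A}
    (ha : IsIdempotentElem a) (b : A) :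
    ⁅a, a * b + b * a⁆ = ⁅a, b⁆ :=
  calc ⁅a, a * b + b * a⁆
      = a * a * b + a * b * a - (a * b * a + b * (a * a)) := by
        simp only [Ring.lie_def, mul_add, add_mul, mul_assoc]
    _ = ⁅a, b⁆ := by rw [ha.eq, Ring.lie_def]; abel

section Algebra

variable {R A : Type*} [CommRing R] [Ring A] [Algebra R A] {l : R} {a b c : A}

lemma mul_add_mul_eq_of_three_idempotents_sum_smul_one (ha : IsIdempotentElem a)
    (hb : IsIdempotentElem b) (hc : IsIdempotentElem c) (hsum : a + b + c = l • (1 : A)) :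
    a * b + b * a = (2 * (l - 1)) • (a + b) - (l * (l - 1)) • (1 : A) := by
  obtain rfl : c = l • (1 : A) - a - b := by rw [← hsum]; abel
  simp only [IsIdempotentElem, mul_sub, sub_mul, smul_mul_assoc, mul_smul_comm, one_mul, mul_one,
    ha.eq, hb.eq] at hc
  linear_combination (norm := module) hc

lemma smul_lie_eq_zero_of_three_idempotents_sum_smul_one (ha : IsIdempotentElem a)
    (hb : IsIdempotentElem b) (hc : IsIdempotentElem c) (hsum : a + b + c = l • (1 : A)) :
    (2 * l - 3) • ⁅a, b⁆ = 0 := by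
  have hbracket : ⁅a, b⁆ = (2 * (l - 1)) • ⁅a, b⁆ :=
    calc ⁅a, b⁆ = ⁅a, a * b + b * a⁆ := (lie_mul_add_mul_of_isIdempotentElem ha b).symm
      _ = ⁅a, (2 * (l - 1)) • (a + b) - (l * (l - 1)) • (1 : A)⁆ := by
        rw [mul_add_mul_eq_of_three_idempotents_sum_smul_one ha hb hc hsum]
      _ = (2 * (l - 1)) • ⁅a, b⁆ := by
        simp only [Ring.lie_def, mul_sub, sub_mul, mul_add, add_mul, mul_smul_comm, smul_mul_assoc,
          mul_one, one_mul]
        module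
  linear_combination (norm := module) -hbracket

variable [IsDomain R] [Module.IsTorsionFree R A]

lemma commute_of_three_idempotents_sum_smul_one (ha : IsIdempotentElem a)
    (hb : IsIdempotentElem b) (hc : IsIdempotentElem c) (hsum : a + b + c = l • (1 : A))
    (hl : 2 * l ≠ 3) : Commute a b := by
  have hlie := smul_lie_eq_zero_of_three_idempotents_sum_smul_one ha hb hc hsum
  exact commute_iff_lie_eq.mpr ((smul_eq_zero.mp hlie).resolve_left (sub_ne_zero.mpr hl))

lemma exists_natCast_eq_of_commuting_idempotents_sum_smul_one [Nontrivial A] {ι : Type*}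
    {q : ι → A} (s : Finset ι) (hq : ∀ i ∈ s, IsIdempotentElem (q i))
    (hcomm : (s : Set ι).Pairwise fun i j ↦ Commute (q i) (q j))
    (hsum : ∑ i ∈ s, q i = l • (1 : A)) : ∃ k ≤ s.card, l = k := by
  obtain ⟨w, hw, k, hk, hkw⟩ :=
    exists_sum_smul_eq_nsmul_of_commuting_idempotents (M := A) s hq hcomm
  refine ⟨k, hk, smul_left_injective R hw ?_⟩
  simpa only [hsum, smul_assoc, one_smul, Nat.cast_smul_eq_nsmul] using hkw

theorem three_idempotents_sum_smul_one_general [Nontrivial A] (ha : IsIdempotentElem a)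
    (hb : IsIdempotentElem b) (hc : IsIdempotentElem c) (hsum : a + b + c = l • (1 : A)) :
    l = 0 ∨ l = 1 ∨ 2 * l = 3 ∨ l = 2 ∨ l = 3 := by
  by_cases hl : 2 * l = 3
  · simp [hl]
  have hab : Commute a b := commute_of_three_idempotents_sum_smul_one ha hb hc hsum hl
  have hac : Commute a c :=
    commute_of_three_idempotents_sum_smul_one ha hc hb (by rw [← hsum]; abel) hl
  have hbc : Commute b c :=
    commute_of_three_idempotents_sum_smul_one hb hc ha (by rw [← hsum]; abel) hl
  obtain ⟨k, hk, rfl⟩ : ∃ k ≤ (Finset.univ : Finset (Fin 3)).card, l = k := by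
    refine exists_natCast_eq_of_commuting_idempotents_sum_smul_one
      (q := ![a, b, c]) Finset.univ ?_ ?_ ?_
    · simp [Fin.forall_fin_succ, ha, hb, hc]
    · simp [Set.Pairwise, Fin.forall_fin_succ, hab, hac, hbc, hab.symm, hac.symm, hbc.symm]
    · simpa [Fin.sum_univ_three] using hsum
  rw [Finset.card_fin] at hk
  interval_cases k <;> simp

end Algebra

/-- In a nonzero unital associative ℂ-algebra, if three idempotents sum to `λ·1`,
then `λ ∈ {0, 1, 3/2, 2, 3}`. -/
theorem three_idempotents_sum_smul_one {A : Type*} [Ring A] [Algebra ℂ A] [Nontrivial A]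
    (lam : ℂ) (q₁ q₂ q₃ : A) (h₁ : q₁ ^ 2 = q₁) (h₂ : q₂ ^ 2 = q₂) (h₃ : q₃ ^ 2 = q₃)
    (hsum : q₁ + q₂ + q₃ = lam • (1 : A)) :
    lam = 0 ∨ lam = 1 ∨ lam = 3 / 2 ∨ lam = 2 ∨ lam = 3 := by
  rw [sq] at h₁ h₂ h₃
  simpa [eq_div_iff, mul_comm lam] using three_idempotents_sum_smul_one_general h₁ h₂ h₃ hsum
end

section
/- Let A be a nonzero unital associative algebra over ℂ and let q₁, q₂, q₃ ∈ A be idempotents with q₁ + q₂ + q₃ = (3/2)·1. Then the unital ℂ-subalgebra of A generated by q₁, q₂, q₃ is isomorphic, as a ℂ-algebra, to the algebra M₂(ℂ) of 2×2 complex matrices. -/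
/-!
If `p` and `q` are idempotents and `(p - q) ^ 2` is a scalar `c`, then `p * q * p = (1 - c) • p` and
`(1 - p) * q * (1 - p) = c • (1 - p)`. So once `c * (1 - c)` is invertible, the off-diagonal Peirce
components of `q` with respect to `p` are, up to a scalar, the off-diagonal members of a system of
`2 × 2` matrix units with diagonal `p`, `1 - p`. Expanding `q₃ ^ 2 = q₃` for `q₃ = 3 / 2 - q₁ - q₂`
says exactly that `(q₁ - q₂) ^ 2 = 3 / 4`.
-/

open Algebra

section MatrixUnits

variable {ι R A : Type*} [Fintype ι] [DecidableEq ι] [CommSemiring R] [Semiring A] [Algebra R A]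

/-- A full system of matrix units of a semiring: a family multiplying like the matrices
`Matrix.single i j 1`, with diagonal members adding up to `1`. -/
structure IsMatrixUnits (e : ι → ι → A) : Prop where
  mul_same (i j k : ι) : e i j * e j k = e i k
  mul_of_ne {j k : ι} (hjk : j ≠ k) (i l : ι) : e i j * e k l = 0
  sum_diag : ∑ i, e i i = 1

namespace IsMatrixUnits

variable {e : ι → ι → A}

theorem mul_eq_ite (he : IsMatrixUnits e) (i j k l : ι) :
    e i j * e k l = if j = k then e i l else 0 := by
  split_ifs with hjk
  · rw [hjk, he.mul_same]
  · exact he.mul_of_ne hjk i l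

variable (R) in
/-- The algebra homomorphism from matrices sending `Matrix.single i j 1` to the matrix unit
`e i j`. -/
def toAlgHom (he : IsMatrixUnits e) : Matrix ι ι R →ₐ[R] A :=
  AlgHom.ofLinearMap (Matrix.liftLinear R fun i j => LinearMap.toSpanSingleton R A (e i j))
    (by simp [Matrix.liftLinear_apply, Matrix.one_apply, he.sum_diag, ite_smul])
    (fun M N => by
      simp only [Matrix.liftLinear_apply, LinearMap.toSpanSingleton_apply, Matrix.mul_apply,
        Finset.sum_smul, Finset.sum_mul_sum, smul_mul_smul_comm, he.mul_eq_ite, smul_ite,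
        smul_zero, Finset.sum_ite_irrel, Finset.sum_const_zero, Finset.sum_ite_eq',
        Finset.mem_univ, if_true]
      exact Finset.sum_congr rfl fun i _ => Finset.sum_comm)

theorem toAlgHom_apply (he : IsMatrixUnits e) (M : Matrix ι ι R) :
    he.toAlgHom R M = ∑ i, ∑ j, M i j • e i j := by
  simp [toAlgHom, Matrix.liftLinear_apply]

theorem toAlgHom_single (he : IsMatrixUnits e) (i j : ι) (r : R) :
    he.toAlgHom R (Matrix.single i j r) = r • e i j := by
  simp [toAlgHom]

theorem mul_toAlgHom_mul (he : IsMatrixUnits e) (M : Matrix ι ι R) (i j k l : ι) :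
    e i j * he.toAlgHom R M * e k l = M j k • e i l := by
  simp [toAlgHom_apply, Finset.mul_sum, Finset.sum_mul, he.mul_eq_ite]

theorem sum_mul_toAlgHom_mul (he : IsMatrixUnits e) (M : Matrix ι ι R) (i j : ι) :
    ∑ k, e k i * he.toAlgHom R M * e j k = M i j • (1 : A) := by
  simp only [he.mul_toAlgHom_mul, ← Finset.smul_sum, he.sum_diag]

theorem toAlgHom_injective [FaithfulSMul R A] (he : IsMatrixUnits e) :
    Function.Injective (he.toAlgHom R) := fun M N hMN => by
  ext i j
  apply FaithfulSMul.algebraMap_injective R A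
  simp only [algebraMap_eq_smul_one, ← he.sum_mul_toAlgHom_mul, hMN]

theorem range_toAlgHom (he : IsMatrixUnits e) :
    (he.toAlgHom R).range = adjoin R (Set.range e.uncurry) := by
  apply le_antisymm
  · rintro _ ⟨M, rfl⟩
    change he.toAlgHom R M ∈ _
    rw [toAlgHom_apply]
    exact sum_mem fun i _ => sum_mem fun j _ =>
      Subalgebra.smul_mem _ (subset_adjoin (Set.mem_range_self (i, j))) _
  · rw [adjoin_le_iff]
    rintro _ ⟨⟨i, j⟩, rfl⟩
    exact ⟨Matrix.single i j 1, by simp [toAlgHom_single]⟩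

variable (R) in
/-- The subalgebra generated by a full system of matrix units is the matrix algebra. -/
noncomputable def matrixEquivAdjoin [FaithfulSMul R A] (he : IsMatrixUnits e) :
    Matrix ι ι R ≃ₐ[R] adjoin R (Set.range e.uncurry) :=
  (AlgEquiv.ofInjective (he.toAlgHom R) he.toAlgHom_injective).trans
    (Subalgebra.equivOfEq _ _ he.range_toAlgHom)

end IsMatrixUnits

end MatrixUnits

section TwoIdempotents

variable {R A : Type*} [CommRing R] [Ring A] [Algebra R A] {p q : A} {c u : R}

theorem one_sub_sub_sq_of_isIdempotentElem (hp : IsIdempotentElem p) (hq : IsIdempotentElem q) :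
    (1 - p - q) ^ 2 = 1 - (p - q) ^ 2 := by
  simp only [sq, mul_sub, sub_mul, mul_one, one_mul, hp.eq, hq.eq]
  abel

/-- Two idempotents whose difference squares to the scalar `c`. This is the algebraic form of a pair
of isoclinic projections, where `c = sin² θ` for the angle `θ` between their ranges. -/
structure IsIsoclinic (c : R) (p q : A) : Prop where
  left : IsIdempotentElem p
  right : IsIdempotentElem q
  sub_sq : (p - q) ^ 2 = c • (1 : A)

/-- The Peirce components of `q` with respect to the idempotent `p`, with the diagonal ones replaced
by `p` and `1 - p` and the lower left one scaled by `u`. When `(p - q) ^ 2 = c • 1` they are matrix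
units for `u = (c * (1 - c))⁻¹`. -/
def peirceUnits (p q : A) (u : R) : Fin 2 → Fin 2 → A :=
  ![![p, p * q * (1 - p)], ![u • ((1 - p) * q * p), 1 - p]]

namespace IsIsoclinic

theorem one_sub_left (h : IsIsoclinic c p q) : IsIsoclinic (1 - c) (1 - p) q where
  left := h.left.one_sub
  right := h.right
  sub_sq := by
    rw [one_sub_sub_sq_of_isIdempotentElem h.left h.right, h.sub_sq, sub_smul, one_smul]

theorem mul_mul_self (h : IsIsoclinic c p q) : p * q * p = (1 - c) • p := by
  have hpp (x : A) : p * (p * x) = p * x := by rw [← mul_assoc, h.left.eq]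
  calc p * q * p = p - p * (p - q) ^ 2 * p := by
        simp only [sq, mul_sub, sub_mul, mul_assoc, h.left.eq, h.right.eq, hpp]
        abel
    _ = (1 - c) • p := by
        rw [h.sub_sq, mul_smul_comm, mul_one, smul_mul_assoc, h.left.eq, sub_smul, one_smul]

theorem one_sub_mul_mul_one_sub (h : IsIsoclinic c p q) :
    (1 - p) * q * (1 - p) = c • (1 - p) := by
  rw [h.one_sub_left.mul_mul_self, sub_sub_cancel]

theorem upper_mul_lower (h : IsIsoclinic c p q) :
    p * q * (1 - p) * ((1 - p) * q * p) = (c * (1 - c)) • p := by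
  calc p * q * (1 - p) * ((1 - p) * q * p)
      = p * q * ((1 - p) * (1 - p)) * q * p := by simp only [mul_assoc]
    _ = p * (q * q) * p - p * q * p * (q * p) := by
        rw [h.left.one_sub.eq]
        noncomm_ring
    _ = p * q * p - (1 - c) • (p * q * p) := by
        rw [h.right.eq, h.mul_mul_self, smul_mul_assoc, ← mul_assoc, h.mul_mul_self]
    _ = (c * (1 - c)) • p := by
        rw [h.mul_mul_self]
        module

theorem lower_mul_upper (h : IsIsoclinic c p q) :
    (1 - p) * q * p * (p * q * (1 - p)) = (c * (1 - c)) • (1 - p) := by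
  have hcorner := h.one_sub_left.upper_mul_lower
  rwa [sub_sub_cancel, sub_sub_cancel, mul_comm (1 - c)] at hcorner

theorem isMatrixUnits_peirceUnits (h : IsIsoclinic c p q) (hu : c * (1 - c) * u = 1) :
    IsMatrixUnits (peirceUnits p q u) := by
  have hpp (x : A) : p * (p * x) = p * x := by rw [← mul_assoc, h.left.eq]
  have hpp' (x : A) : (1 - p) * ((1 - p) * x) = (1 - p) * x := by
    rw [← mul_assoc, h.left.one_sub.eq]
  have hortho (x : A) : p * ((1 - p) * x) = 0 := by
    rw [← mul_assoc, h.left.mul_one_sub_self, zero_mul]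
  have hortho' (x : A) : (1 - p) * (p * x) = 0 := by
    rw [← mul_assoc, h.left.one_sub_mul_self, zero_mul]
  have hupper : p * q * (1 - p) * (u • ((1 - p) * q * p)) = p := by
    rw [mul_smul_comm, h.upper_mul_lower, smul_smul, mul_comm u, hu, one_smul]
  have hlower : u • ((1 - p) * q * p) * (p * q * (1 - p)) = 1 - p := by
    rw [smul_mul_assoc, h.lower_mul_upper, smul_smul, mul_comm u, hu, one_smul]
  refine ⟨fun i j k => ?_, fun {j k} hjk i l => ?_, ?_⟩
  · fin_cases i <;> fin_cases j <;> fin_cases k <;>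
      first
      | exact hupper
      | exact hlower
      | simp [peirceUnits, mul_assoc, h.left.eq, h.left.one_sub.eq, hpp, hpp']
  · fin_cases i <;> fin_cases j <;> fin_cases k <;> fin_cases l <;>
      first
      | exact absurd rfl hjk
      | simp [peirceUnits, mul_assoc, hortho, hortho', h.left.mul_one_sub_self,
          h.left.one_sub_mul_self]
  · simp [peirceUnits]

theorem sum_smul_peirceUnits (h : IsIsoclinic c p q) (hu : c * (1 - c) * u = 1) :
    (1 - c) • peirceUnits p q u 0 0 + peirceUnits p q u 0 1 +
      (c * (1 - c)) • peirceUnits p q u 1 0 + c • peirceUnits p q u 1 1 = q := by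
  calc (1 - c) • p + p * q * (1 - p) + (c * (1 - c)) • u • ((1 - p) * q * p) + c • (1 - p)
      = p * q * p + p * q * (1 - p) + (1 - p) * q * p + (1 - p) * q * (1 - p) := by
        rw [h.mul_mul_self, h.one_sub_mul_mul_one_sub, smul_smul, hu, one_smul]
    _ = q := by noncomm_ring

theorem adjoin_range_peirceUnits (h : IsIsoclinic c p q) (hu : c * (1 - c) * u = 1) :
    adjoin R (Set.range (peirceUnits p q u).uncurry) = adjoin R {p, q} := by
  apply le_antisymm <;> rw [adjoin_le_iff]
  · have hp : p ∈ adjoin R {p, q} := subset_adjoin (by simp)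
    have hq : q ∈ adjoin R {p, q} := subset_adjoin (by simp)
    have hp' : 1 - p ∈ adjoin R {p, q} := sub_mem (one_mem _) hp
    rintro _ ⟨⟨i, j⟩, rfl⟩
    fin_cases i <;> fin_cases j
    · exact hp
    · exact mul_mem (mul_mem hp hq) hp'
    · exact Subalgebra.smul_mem _ (mul_mem (mul_mem hp' hq) hp) u
    · exact hp'
  · set S := adjoin R (Set.range (peirceUnits p q u).uncurry)
    have hmem (i j : Fin 2) : peirceUnits p q u i j ∈ S :=
      subset_adjoin (Set.mem_range_self (i, j))
    have hq := add_mem (add_mem (add_mem (S.smul_mem (hmem 0 0) (1 - c)) (hmem 0 1))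
      (S.smul_mem (hmem 1 0) (c * (1 - c)))) (S.smul_mem (hmem 1 1) c)
    rw [h.sum_smul_peirceUnits hu] at hq
    rintro _ (rfl | rfl)
    · exact hmem 0 0
    · exact hq

theorem nonempty_adjoin_algEquiv_matrix [FaithfulSMul R A] (h : IsIsoclinic c p q)
    (hc : IsUnit (c * (1 - c))) :
    Nonempty (adjoin R {p, q} ≃ₐ[R] Matrix (Fin 2) (Fin 2) R) := by
  obtain ⟨u, hu⟩ := hc.exists_right_inv
  rw [← h.adjoin_range_peirceUnits hu]
  exact ⟨((h.isMatrixUnits_peirceUnits hu).matrixEquivAdjoin R).symm⟩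

end IsIsoclinic

end TwoIdempotents

section ThreeIdempotents

variable {R A : Type*} [CommRing R] [Ring A] [Algebra R A] {q₁ q₂ q₃ : A} {s : R}

theorem sub_sq_of_add_add_eq_smul_one (h₁ : IsIdempotentElem q₁) (h₂ : IsIdempotentElem q₂)
    (h₃ : IsIdempotentElem q₃) (hsum : q₁ + q₂ + q₃ = s • 1) :
    (q₁ - q₂) ^ 2 = (s * (s - 1)) • (1 : A) + (3 - 2 * s) • (q₁ + q₂) := by
  obtain rfl : q₃ = s • 1 - q₁ - q₂ := by rw [← hsum]; abel
  have h₃ := h₃.eq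
  simp only [sq, mul_sub, sub_mul, smul_mul_assoc, mul_smul_comm, mul_one, one_mul,
    h₁.eq, h₂.eq] at h₃ ⊢
  linear_combination (norm := module) (-1 : R) • h₃

theorem adjoin_triple_eq_adjoin_pair (hsum : q₁ + q₂ + q₃ = s • 1) :
    adjoin R {q₁, q₂, q₃} = adjoin R {q₁, q₂} := by
  have hq₁ : q₁ ∈ adjoin R {q₁, q₂} := subset_adjoin (by simp)
  have hq₂ : q₂ ∈ adjoin R {q₁, q₂} := subset_adjoin (by simp)
  have hq₃ : q₃ ∈ adjoin R {q₁, q₂} := by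
    rw [eq_sub_of_add_eq' hsum]
    exact sub_mem (Subalgebra.smul_mem _ (one_mem _) s) (add_mem hq₁ hq₂)
  refine le_antisymm (adjoin_le ?_) (adjoin_mono (by grind))
  rintro _ (rfl | rfl | rfl) <;> assumption

theorem three_idempotents_sum_three_halves_gen_matrix_algebra_general [FaithfulSMul R A]
    (hs : 2 * s = 3) (hunit : IsUnit (3 : R)) (h₁ : IsIdempotentElem q₁)
    (h₂ : IsIdempotentElem q₂) (h₃ : IsIdempotentElem q₃) (hsum : q₁ + q₂ + q₃ = s • 1) :
    Nonempty (adjoin R {q₁, q₂, q₃} ≃ₐ[R] Matrix (Fin 2) (Fin 2) R) := by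
  have hpair : IsIsoclinic (s * (s - 1)) q₁ q₂ := by
    refine ⟨h₁, h₂, ?_⟩
    rw [sub_sq_of_add_add_eq_smul_one h₁ h₂ h₃ hsum, hs, sub_self, zero_smul, add_zero]
  have hprod : s * (s - 1) * (1 - s * (s - 1)) * 16 = 3 := by
    have hfour : 4 * (s * (s - 1)) = 3 := by linear_combination (2 * s + 1) * hs
    linear_combination (1 - 4 * (s * (s - 1))) * hfour
  rw [adjoin_triple_eq_adjoin_pair hsum]
  exact hpair.nonempty_adjoin_algEquiv_matrix (isUnit_of_mul_isUnit_left (hprod ▸ hunit))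

end ThreeIdempotents

/-- If three idempotents in a nonzero unital associative ℂ-algebra sum to `(3/2)·1`,
then the unital subalgebra they generate is isomorphic to `M₂(ℂ)`. -/
theorem three_idempotents_sum_three_halves_gen_matrix_algebra
    {A : Type*} [Ring A] [Algebra ℂ A] [Nontrivial A]
    (q₁ q₂ q₃ : A) (h₁ : q₁ ^ 2 = q₁) (h₂ : q₂ ^ 2 = q₂) (h₃ : q₃ ^ 2 = q₃)
    (hsum : q₁ + q₂ + q₃ = ((3 : ℂ) / 2) • (1 : A)) :
    Nonempty (Algebra.adjoin ℂ ({q₁, q₂, q₃} : Set A) ≃ₐ[ℂ] Matrix (Fin 2) (Fin 2) ℂ) := by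
  simp only [sq] at h₁ h₂ h₃
  exact three_idempotents_sum_three_halves_gen_matrix_algebra_general (by norm_num) (by norm_num)
    h₁ h₂ h₃ hsum
end

section
/- Let H be a nonzero complex Hilbert space and let Q be a bounded linear operator on H with Q² = Q. Suppose that the only closed subspaces K ⊆ H invariant under both Q and its Hilbert-space adjoint Q* (i.e. Q(K) ⊆ K and Q*(K) ⊆ K) are {0} and H. Then H is finite dimensional of dimension at most 2. -/
/-!
For idempotents `P` and `Q`, the square `(P - Q) ^ 2` commutes with both. If `P` and `Q` leave no
proper nonzero closed subspace invariant and this square is normal, then it is a scalar `c`: the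
continuous functional calculus would otherwise give nonzero operators `f(T)` and `g(T)` with
product zero, and the kernel of `f(T)` would be a proper nonzero invariant subspace.
Now let `P x = μ x` with `x ≠ 0`. Expanding `(P - Q) ^ 2 x = c x` expresses `P Q x` in terms of `x`
and `Q x`, so the span of `x` and `Q x` is invariant under `P` and `Q` and is the whole space.
-/

section FunctionalCalculus

variable {𝕜 A : Type*} {p : A → Prop} [RCLike 𝕜] [Ring A] [StarRing A] [TopologicalSpace A]
  [Algebra 𝕜 A] [ContinuousFunctionalCalculus 𝕜 A p]

theorem spectrum_subsingleton_of_cfc_mul_eq_zero_imp {a : A} (ha : p a)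
    (h : ∀ f g : 𝕜 → 𝕜, cfc f a * cfc g a = 0 → cfc f a = 0 ∨ cfc g a = 0) :
    (spectrum 𝕜 a).Subsingleton := by
  intro z hz w hw
  by_contra hzw
  -- `f z w` and `f w z` have disjoint supports and are positive at `z` and `w` respectively.
  let f (u v x : 𝕜) : 𝕜 := (max (dist x v - dist x u) 0 : ℝ)
  have hf (u v : 𝕜) : Continuous (f u v) := by fun_prop
  have hmul : cfc (f z w) a * cfc (f w z) a = 0 := by
    rw [← cfc_mul (f z w) (f w z) a (hf z w).continuousOn (hf w z).continuousOn, ← cfc_zero 𝕜 a]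
    congr 1
    ext x
    rcases le_total (dist x w) (dist x z) with hx | hx <;> simp [f, hx]
  have cfc_ne_zero {u v : 𝕜} (hu : u ∈ spectrum 𝕜 a) (huv : u ≠ v) : cfc (f u v) a ≠ 0 := by
    intro h0
    have hfu : f u v u = 0 :=
      eqOn_of_cfc_eq_cfc (h0.trans (cfc_zero 𝕜 a).symm) (hf u v).continuousOn
        continuousOn_const ha hu
    have : dist u v ≤ 0 := by simpa [f] using hfu
    exact huv (dist_le_zero.mp this)
  exact (h _ _ hmul).elim (cfc_ne_zero hz hzw) (cfc_ne_zero hw (Ne.symm hzw))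

end FunctionalCalculus

/-- A set of continuous endomorphisms of a topological module is topologically irreducible if the
only closed submodules invariant under all its members are `⊥` and `⊤`; the zero module is allowed.
For `S = {Q, Q*}` on a Hilbert space, these submodules are the reducing subspaces of `Q`. -/
def IsTopologicallyIrreducible {R M : Type*} [Semiring R] [AddCommMonoid M] [Module R M]
    [TopologicalSpace M] (S : Set (M →L[R] M)) : Prop :=
  ∀ K : Submodule R M, IsClosed (K : Set M) →
    (∀ A ∈ S, K ∈ Module.End.invtSubmodule A.toLinearMap) → K = ⊥ ∨ K = ⊤

namespace IsTopologicallyIrreducible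

section Module

variable {R M : Type*} [Semiring R] [AddCommMonoid M] [Module R M] [TopologicalSpace M]

theorem pair_iff {A B : M →L[R] M} :
    IsTopologicallyIrreducible {A, B} ↔ ∀ K : Submodule R M, IsClosed (K : Set M) →
      (∀ x ∈ K, A x ∈ K) → (∀ x ∈ K, B x ∈ K) → K = ⊥ ∨ K = ⊤ := by
  simp [IsTopologicallyIrreducible, Module.End.mem_invtSubmodule_iff_forall_mem_of_mem]

theorem ker_eq_bot_or_eq_zero [T1Space M] {S : Set (M →L[R] M)}
    (hS : IsTopologicallyIrreducible S) {A : M →L[R] M} (hA : ∀ B ∈ S, Commute A B) :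
    A.ker = ⊥ ∨ A = 0 := by
  refine (hS A.ker A.isClosed_ker fun B hB x (hx : A x = 0) ↦ ?_).imp_right fun hker ↦ ?_
  · calc A (B x) = B (A x) := congr($((hA B hB).eq) x)
      _ = 0 := by rw [hx, map_zero]
  · ext x
    exact (hker ▸ Submodule.mem_top : x ∈ A.ker)

end Module

theorem eq_zero_or_eq_zero_of_mul_eq_zero {R M : Type*} [Ring R] [AddCommGroup M] [Module R M]
    [TopologicalSpace M] [T1Space M] {S : Set (M →L[R] M)} (hS : IsTopologicallyIrreducible S)
    {A B : M →L[R] M} (hA : ∀ C ∈ S, Commute A C) (hAB : A * B = 0) : A = 0 ∨ B = 0 := by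
  refine (hS.ker_eq_bot_or_eq_zero hA).symm.imp_right fun hker ↦ ContinuousLinearMap.ext fun x ↦ ?_
  exact LinearMap.ker_eq_bot'.mp hker (B x) congr($hAB x)

/-- **Schur's lemma** for normal operators. -/
theorem exists_eq_algebraMap {H : Type*} [NormedAddCommGroup H] [InnerProductSpace ℂ H]
    [CompleteSpace H] {S : Set (H →L[ℂ] H)} (hS : IsTopologicallyIrreducible S) {T : H →L[ℂ] H}
    (hT : IsStarNormal T) (hTS : ∀ A ∈ S, Commute T A) :
    ∃ c : ℂ, T = algebraMap ℂ (H →L[ℂ] H) c := by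
  rcases subsingleton_or_nontrivial H with _ | _
  · exact ⟨0, Subsingleton.elim _ _⟩
  have cfc_commute (f : ℂ → ℂ) : ∀ A ∈ S, Commute (cfc f T) A := fun A hA ↦
    (hTS A hA).cfc (hT.commute_star_left (hTS A hA)) f
  have hsub : (spectrum ℂ T).Subsingleton :=
    spectrum_subsingleton_of_cfc_mul_eq_zero_imp hT fun f _ ↦
      hS.eq_zero_or_eq_zero_of_mul_eq_zero (cfc_commute f)
  obtain ⟨c, hc⟩ := spectrum.nonempty T
  exact ⟨c, CFC.eq_algebraMap_of_spectrum_subset_singleton T c fun z hz ↦ hsub hz hc⟩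

end IsTopologicallyIrreducible

theorem commute_sub_sq_of_isIdempotentElem {R : Type*} [Ring R] {p q : R}
    (hp : IsIdempotentElem p) (hq : IsIdempotentElem q) : Commute ((p - q) ^ 2) p := by
  have hsq : (p - q) ^ 2 = p + q - p * q - q * p := by
    rw [sq, mul_sub, sub_mul, sub_mul, hp.eq, hq.eq]
    abel
  calc (p - q) ^ 2 * p = p - p * q * p := by
        rw [hsq, sub_mul, sub_mul, add_mul, mul_assoc q p p, hp.eq]
        abel
    _ = p * (p - q) ^ 2 := by
        rw [hsq, mul_sub, mul_sub, mul_add, ← mul_assoc p p q, hp.eq, mul_assoc]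
        abel

theorem isSelfAdjoint_sub_star_sq {R : Type*} [Ring R] [StarRing R] (a : R) :
    IsSelfAdjoint ((a - star a) ^ 2) := by
  rw [IsSelfAdjoint, star_pow, star_sub, star_star, ← neg_sub, neg_sq]

section Algebra

variable {R M : Type*} [CommRing R] [AddCommGroup M] [Module R M]

theorem exists_hasEigenvector_of_isIdempotentElem [Nontrivial M] {p : Module.End R M}
    (hp : IsIdempotentElem p) : ∃ μ x, p.HasEigenvector μ x := by
  obtain ⟨x, hx⟩ := exists_ne (0 : M)
  by_cases hpx : p x = 0
  · exact ⟨0, x, Module.End.mem_eigenspace_iff.mpr (by simpa using hpx), hx⟩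
  · exact ⟨1, p x, Module.End.mem_eigenspace_iff.mpr (by simpa using congr($hp x)), hpx⟩

theorem span_pair_mem_invtSubmodule {f : Module.End R M} {x y : M}
    (hx : f x ∈ Submodule.span R {x, y}) (hy : f y ∈ Submodule.span R {x, y}) :
    Submodule.span R {x, y} ∈ f.invtSubmodule :=
  Submodule.span_le.mpr (Set.pair_subset hx hy)

theorem span_pair_apply_mem_invtSubmodule_of_isIdempotentElem {q : Module.End R M}
    (hq : IsIdempotentElem q) (x : M) : Submodule.span R {x, q x} ∈ q.invtSubmodule := by
  have hqx : q x ∈ Submodule.span R {x, q x} := Submodule.mem_span_of_mem (by simp)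
  have hqqx : q (q x) = q x := congr($hq x)
  exact span_pair_mem_invtSubmodule hqx (hqqx.symm ▸ hqx)

theorem span_pair_apply_mem_invtSubmodule_of_sub_sq_apply {p q : Module.End R M}
    (hq : IsIdempotentElem q) {c μ : R} {x : M} (hp : p x = μ • x)
    (hc : ((p - q) ^ 2) x = c • x) : Submodule.span R {x, q x} ∈ p.invtSubmodule := by
  have hqqx : q (q x) = q x := congr($hq x)
  have hexpand : μ • μ • x - p (q x) - (μ • q x - q x) = c • x := by
    simpa [sq, hp, hqqx] using hc
  have hpqx : (μ * μ - c) • x + (1 - μ) • q x = p (q x) := by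
    rw [sub_smul, ← hexpand]
    module
  exact span_pair_mem_invtSubmodule (Submodule.mem_span_pair.mpr ⟨μ, 0, by simp [hp]⟩)
    (Submodule.mem_span_pair.mpr ⟨_, _, hpqx⟩)

end Algebra

theorem finiteDimensional_and_finrank_le_two_of_span_pair_eq_top {K V : Type*} [DivisionRing K]
    [AddCommGroup V] [Module K V] {x y : V} (h : Submodule.span K {x, y} = ⊤) :
    FiniteDimensional K V ∧ Module.finrank K V ≤ 2 :=
  ⟨Module.finite_def.mpr (h ▸ Submodule.fg_span (Set.toFinite _)), by
    simpa using finrank_le_of_span_eq_top (v := ![x, y]) (by simpa [Set.pair_comm] using h)⟩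

theorem irreducible_idempotent_dim_le_two_general {H : Type*} [NormedAddCommGroup H]
    [InnerProductSpace ℂ H] [CompleteSpace H] {P Q : H →L[ℂ] H} (hP : IsIdempotentElem P)
    (hQ : IsIdempotentElem Q) (hPQ : IsStarNormal ((P - Q) ^ 2))
    (hirr : IsTopologicallyIrreducible {P, Q}) :
    FiniteDimensional ℂ H ∧ Module.finrank ℂ H ≤ 2 := by
  rcases subsingleton_or_nontrivial H with _ | _
  · exact ⟨inferInstance, Module.finrank_zero_of_subsingleton.trans_le zero_le_two⟩
  have hcomm : ∀ A ∈ ({P, Q} : Set (H →L[ℂ] H)), Commute ((P - Q) ^ 2) A := by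
    rintro A (rfl | rfl)
    · exact commute_sub_sq_of_isIdempotentElem hP hQ
    · rw [← neg_sub, neg_sq]
      exact commute_sub_sq_of_isIdempotentElem hQ hP
  obtain ⟨c, hc⟩ := hirr.exists_eq_algebraMap hPQ hcomm
  have hP' : IsIdempotentElem P.toLinearMap := ContinuousLinearMap.IsIdempotentElem.toLinearMap hP
  have hQ' : IsIdempotentElem Q.toLinearMap := ContinuousLinearMap.IsIdempotentElem.toLinearMap hQ
  obtain ⟨μ, x, hx⟩ := exists_hasEigenvector_of_isIdempotentElem hP'
  have hcx : ((P.toLinearMap - Q.toLinearMap) ^ 2) x = c • x := congr($hc x)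
  have : FiniteDimensional ℂ (Submodule.span ℂ {x, Q x}) := .span_of_finite ℂ (Set.toFinite _)
  refine finiteDimensional_and_finrank_le_two_of_span_pair_eq_top (x := x) (y := Q x) <|
    (hirr _ (Submodule.closed_of_finiteDimensional _) ?_).resolve_left fun hbot ↦ ?_
  · rintro A (rfl | rfl)
    · exact span_pair_apply_mem_invtSubmodule_of_sub_sq_apply hQ' hx.apply_eq_smul hcx
    · exact span_pair_apply_mem_invtSubmodule_of_isIdempotentElem hQ' x
  · exact hx.2 (Submodule.span_eq_bot.mp hbot x (by simp))

/-- If `Q` is a bounded idempotent on a nonzero complex Hilbert space and the only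
closed subspaces invariant under both `Q` and `Q*` are `{0}` and `H`, then
`H` is finite dimensional of dimension at most `2`. -/
theorem irreducible_idempotent_dim_le_two
    {H : Type*} [NormedAddCommGroup H] [InnerProductSpace ℂ H] [CompleteSpace H]
    [Nontrivial H] (Q : H →L[ℂ] H) (hQ : Q ∘L Q = Q)
    (hirr : ∀ K : Submodule ℂ H, IsClosed (K : Set H) →
      (∀ x ∈ K, Q x ∈ K) → (∀ x ∈ K, ContinuousLinearMap.adjoint Q x ∈ K) →
      K = ⊥ ∨ K = ⊤) :
    FiniteDimensional ℂ H ∧ Module.finrank ℂ H ≤ 2 :=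
  irreducible_idempotent_dim_le_two_general hQ (IsIdempotentElem.star hQ)
    (isSelfAdjoint_sub_star_sq Q).isStarNormal (IsTopologicallyIrreducible.pair_iff.mpr hirr)
end

section
/- Let λ ∈ ℂ. There exist a natural number d ≥ 1 and d×d complex matrices Q₁, Q₂, Q₃, Q₄ with Qₖ² = Qₖ for all k and Q₁ + Q₂ + Q₃ + Q₄ = λ·I if and only if λ = 2 or λ = 2 + 2/k or λ = 2 − 2/k for some positive integer k. -/
/-! If `p` and `q` are idempotent, then `x = p + q - 1` and `y = p - q` satisfy `x y = -y x` and
`y² = 1 - x²`, so the spectrum of `x` is symmetric about `0` except possibly at `±1`. If four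
idempotents sum to `2 + c`, then their two pairs give `x₁ + x₂ = c`, so the spectrum of `x₁` is also
symmetric about `c` except possibly at `c ± 1`. For `c ≠ 0`, starting from a spectral value `t`, the
two reflections would produce infinitely many others unless both progressions `t, t + c, …` and
`t - c, t - 2c, …` hit `±1`; the difference of the two hits is a positive multiple of `c` and, being
nonzero, equals `±2`.

Conversely, on the space with basis `0, …, k - 1` take the idempotent that acts with rank one on
each of the blocks `{0, 1}, {2, 3}, …`, and the one for the blocks `{0}, {1, 2}, {3, 4}, …`.
Conjugating either by `diag (1, -1, 1, …)` negates its off-diagonal entries, so an idempotent plus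
its conjugate is diagonal, and the two diagonals can be chosen to add up to `2 + 2/k`. -/

open Finset
open scoped TensorProduct

section SpectralSymmetry

variable {R A : Type*} [Ring A] {p q : A}

lemma add_sub_one_mul_sub_eq_neg (hp : IsIdempotentElem p) (hq : IsIdempotentElem q) :
    (p + q - 1) * (p - q) = -((p - q) * (p + q - 1)) := by
  simp only [mul_sub, sub_mul, add_mul, mul_add, hp.eq, hq.eq, mul_one, one_mul]
  abel

lemma sub_mul_sub_eq_one_sub (hp : IsIdempotentElem p) (hq : IsIdempotentElem q) :
    (p - q) * (p - q) = 1 - (p + q - 1) * (p + q - 1) := by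
  simp only [mul_sub, sub_mul, add_mul, mul_add, hp.eq, hq.eq, mul_one, one_mul]
  abel

variable [CommRing R] [Algebra R A]

lemma neg_mem_spectrum_of_anticommute {x y : A} (hxy : x * y = -(y * x))
    (hyy : y * y = 1 - x * x) {s : R} (hs : s ∈ spectrum R x) (hs1 : IsUnit (1 - s ^ 2)) :
    -s ∈ spectrum R x := by
  contrapose! hs
  rw [spectrum.notMem_iff] at hs ⊢
  set u : A := algebraMap R A s
  have hux : u * x = x * u := Algebra.commutes s x
  have huy : u * y = y * u := Algebra.commutes s y
  have hadd : IsUnit (u + x) := by rwa [map_neg, ← neg_add', IsUnit.neg_iff] at hs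
  obtain ⟨⟨v, z, hvz, hzv⟩, rfl : v = u + x⟩ := hadd
  have hy_add : y * (u + x) = (u - x) * y := by rw [mul_add, sub_mul, hxy, huy]; abel
  have hy_sub : y * (u - x) = (u + x) * y := by rw [mul_sub, add_mul, hxy, huy]; abel
  -- `y` intertwines `u - x` and `u + x`, so `y z y` inverts `u - x` up to `y² = 1 - x²`.
  have hright : (u - x) * (y * z * y - (u + x)) = 1 - u ^ 2 := by
    calc _ = (u - x) * y * z * y - (u - x) * (u + x) := by noncomm_ring
      _ = y * y - (u - x) * (u + x) := by rw [← hy_add, mul_assoc y, hvz, mul_one]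
      _ = 1 - u ^ 2 := by rw [hyy, sub_mul, mul_add, mul_add, hux, sq]; abel
  have hleft : (y * z * y - (u + x)) * (u - x) = 1 - u ^ 2 := by
    calc _ = y * z * (y * (u - x)) - (u + x) * (u - x) := by noncomm_ring
      _ = y * y - (u + x) * (u - x) := by rw [hy_sub, ← mul_assoc, mul_assoc y, hzv, mul_one]
      _ = 1 - u ^ 2 := by rw [hyy, add_mul, mul_sub, mul_sub, hux, sq]; abel
  have hcomm : Commute (u - x) (y * z * y - (u + x)) := hright.trans hleft.symm
  have hunit : IsUnit (1 - u ^ 2) := by simpa [u] using hs1.map (algebraMap R A)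
  exact (hcomm.isUnit_mul_iff.mp (hright ▸ hunit)).1

lemma neg_mem_spectrum_add_sub_one (hp : IsIdempotentElem p) (hq : IsIdempotentElem q) {s : R}
    (hs : s ∈ spectrum R (p + q - 1)) (hs1 : IsUnit (1 - s ^ 2)) :
    -s ∈ spectrum R (p + q - 1) :=
  neg_mem_spectrum_of_anticommute (add_sub_one_mul_sub_eq_neg hp hq) (sub_mul_sub_eq_one_sub hp hq)
    hs hs1

end SpectralSymmetry

lemma finite_spectrum_of_isIntegral {K A : Type*} [Field K] [Ring A] [Algebra K A] {a : A}
    (ha : IsIntegral K a) : (spectrum K a).Finite := by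
  nontriviality A
  refine (Polynomial.finite_setOfPred_isRoot (minpoly.ne_zero ha)).subset fun s hs => ?_
  simpa using spectrum.subset_polynomial_aeval a (minpoly K a) ⟨s, hs, rfl⟩

section Reflections

variable {R : Type*} [CommRing R] [IsDomain R] [CharZero R] {S T : Set R} {c t : R}

lemma exists_add_mul_sq_eq_one (hc : c ≠ 0) (hfin : S.Finite) (hST : ∀ s, s ∈ S ↔ c - s ∈ T)
    (hS : ∀ s ∈ S, s ^ 2 ≠ 1 → -s ∈ S) (hT : ∀ s ∈ T, s ^ 2 ≠ 1 → -s ∈ T) (ht : t ∈ S) :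
    ∃ m : ℕ, (t + m * c) ^ 2 = 1 := by
  by_contra! hne
  have hmem (n : ℕ) : t + 2 * n * c ∈ S := by
    induction n with
    | zero => simpa using ht
    | succ n ih =>
      have hneg : -(t + 2 * n * c) ∈ S := hS _ ih (by simpa using hne (2 * n))
      have hrefl : t + (2 * n + 1) * c ∈ T := by
        convert (hST _).mp hneg using 1
        ring
      have hneg' : -(t + (2 * n + 1) * c) ∈ T := hT _ hrefl (by simpa using hne (2 * n + 1))
      rw [hST]
      convert hneg' using 1
      push_cast
      ring
  refine Set.infinite_of_injective_forall_mem (fun m n hmn => ?_) hmem hfin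
  simpa [hc] using hmn

lemma exists_nat_mul_eq_two_or_neg_two (hc : c ≠ 0) (hfin : S.Finite) (hne : S.Nonempty)
    (hST : ∀ s, s ∈ S ↔ c - s ∈ T) (hS : ∀ s ∈ S, s ^ 2 ≠ 1 → -s ∈ S)
    (hT : ∀ s ∈ T, s ^ 2 ≠ 1 → -s ∈ T) :
    ∃ k : ℕ, 0 < k ∧ (k * c = 2 ∨ k * c = -2) := by
  obtain ⟨t, ht⟩ := hne
  have hTS (s : R) : s ∈ T ↔ c - s ∈ S := by rw [hST, sub_sub_cancel]
  have hTfin : T.Finite := (hfin.preimage sub_right_injective.injOn).subset fun s => (hTS s).mp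
  obtain ⟨m, hm⟩ := exists_add_mul_sq_eq_one hc hfin hST hS hT ht
  obtain ⟨n, hn⟩ := exists_add_mul_sq_eq_one hc hTfin hTS hT hS ((hST t).mp ht)
  have hk : ((m + n + 1 : ℕ) : R) * c ≠ 0 := mul_ne_zero (Nat.cast_ne_zero.mpr (by omega)) hc
  have hsum : ((m + n + 1 : ℕ) : R) * c = (t + m * c) + (c - t + n * c) := by push_cast; ring
  refine ⟨m + n + 1, by omega, ?_⟩
  rw [hsum] at hk ⊢
  rcases sq_eq_one_iff.mp hm with hm | hm <;> rcases sq_eq_one_iff.mp hn with hn | hn <;>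
    rw [hm, hn] at hk ⊢
  · exact Or.inl one_add_one_eq_two
  · exact absurd (add_neg_cancel 1) hk
  · exact absurd (neg_add_cancel 1) hk
  · exact Or.inr (by rw [← neg_add, one_add_one_eq_two])

end Reflections

section Necessity

variable {K A : Type*} [Field K] [CharZero K] [Ring A] [Nontrivial A] [Algebra K A]
  [FiniteDimensional K A] {Q : Fin 4 → A} {c : K}

lemma exists_nat_mul_eq_of_sum_idempotents_of_isAlgClosed [IsAlgClosed K]
    (hQ : ∀ j, IsIdempotentElem (Q j)) (hc : c ≠ 0) (hsum : ∑ j, Q j = algebraMap K A (2 + c)) :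
    ∃ k : ℕ, 0 < k ∧ (k * c = 2 ∨ k * c = -2) := by
  have hx : Q 2 + Q 3 - 1 = algebraMap K A c - (Q 0 + Q 1 - 1) := by
    calc Q 2 + Q 3 - 1 = ∑ j, Q j - 2 - (Q 0 + Q 1 - 1) := by
          rw [Fin.sum_univ_four, ← one_add_one_eq_two]
          abel
      _ = algebraMap K A c - (Q 0 + Q 1 - 1) := by
          rw [hsum, map_add, map_ofNat, add_sub_cancel_left]
  have hunit {s : K} (hs : s ^ 2 ≠ 1) : IsUnit (1 - s ^ 2) := (sub_ne_zero.mpr hs.symm).isUnit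
  refine exists_nat_mul_eq_two_or_neg_two (S := spectrum K (Q 0 + Q 1 - 1))
    (T := spectrum K (Q 2 + Q 3 - 1)) hc
    (finite_spectrum_of_isIntegral (Algebra.IsIntegral.isIntegral _))
    (spectrum.nonempty_of_isAlgClosed_of_finiteDimensional K _) (fun s => ?_)
    (fun s hs hs1 => neg_mem_spectrum_add_sub_one (hQ 0) (hQ 1) hs (hunit hs1))
    (fun s hs hs1 => neg_mem_spectrum_add_sub_one (hQ 2) (hQ 3) hs (hunit hs1))
  rw [hx, ← spectrum.singleton_sub_eq, Set.singleton_sub]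
  exact (sub_right_injective.mem_set_image).symm

lemma exists_nat_mul_eq_of_sum_idempotents (hQ : ∀ j, IsIdempotentElem (Q j)) (hc : c ≠ 0)
    (hsum : ∑ j, Q j = algebraMap K A (2 + c)) :
    ∃ k : ℕ, 0 < k ∧ (k * c = 2 ∨ k * c = -2) := by
  let L := AlgebraicClosure K
  let ι : A →ₐ[K] L ⊗[K] A := Algebra.TensorProduct.includeRight
  have hinj : Function.Injective (algebraMap K L) := (algebraMap K L).injective
  have hsum' : ∑ j, ι (Q j) = algebraMap L (L ⊗[K] A) (2 + algebraMap K L c) := by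
    rw [← map_sum, hsum, ι.commutes, IsScalarTower.algebraMap_apply K L, map_add, map_ofNat]
  obtain ⟨k, hk, h⟩ := exists_nat_mul_eq_of_sum_idempotents_of_isAlgClosed
    (fun j => (hQ j).map ι) ((map_ne_zero_iff _ hinj).mpr hc) hsum'
  refine ⟨k, hk, h.imp (fun h => hinj ?_) fun h => hinj ?_⟩
  · rw [map_mul, map_natCast, map_ofNat, h]
  · rw [map_mul, map_natCast, map_neg, map_ofNat, h]

end Necessity

section FiberwiseIdempotents

variable {n β R : Type*} [DecidableEq β]

/-- The square matrix whose block on each fiber of `f` is the outer product of `u` and `v`, with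
zeros between different fibers. If `v` pairs with `u` to `1` on every fiber, it is the idempotent
that has rank one on each fiber. -/
def fiberwiseOuter [MulZeroClass R] (f : n → β) (u v : n → R) : Matrix n n R :=
  Matrix.of fun i j => if f i = f j then u i * v j else 0

lemma isIdempotentElem_fiberwiseOuter [Fintype n] [Semiring R] {f : n → β} {u v : n → R}
    (h : ∀ i, ∑ j with f j = f i, v j * u j = 1) : IsIdempotentElem (fiberwiseOuter f u v) := by
  ext i l
  have hterm (j : n) : fiberwiseOuter f u v i j * fiberwiseOuter f u v j l =
      if f j = f i then (if f i = f l then u i * (v j * u j) * v l else 0) else 0 := by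
    by_cases hij : f j = f i
    · simp [fiberwiseOuter, hij, mul_assoc]
    · simp [fiberwiseOuter, hij, Ne.symm hij]
  simp only [Matrix.mul_apply, hterm, ← sum_filter]
  by_cases hil : f i = f l
  · simp [fiberwiseOuter, ← sum_mul, ← mul_sum, hil, h]
  · simp [fiberwiseOuter, hil]

lemma exists_idempotents_add_eq_diagonal [Fintype n] [DecidableEq n] [CommRing R]
    {f : n → β} {w ε : n → R} (hw : ∀ i, ∑ j with f j = f i, w j = 1) (hε : ∀ i, ε i * ε i = 1)
    (hε_ne : ∀ i j, f i = f j → i ≠ j → ε i * ε j = -1) :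
    ∃ P Q : Matrix n n R, IsIdempotentElem P ∧ IsIdempotentElem Q ∧
      P + Q = Matrix.diagonal (2 * w) := by
  refine ⟨fiberwiseOuter f w 1, fiberwiseOuter f (w * ε) ε,
    isIdempotentElem_fiberwiseOuter (by simpa using hw),
    isIdempotentElem_fiberwiseOuter fun i => ?_, ?_⟩
  · rw [← hw i]
    exact sum_congr rfl fun j _ => by rw [Pi.mul_apply, mul_left_comm, hε, mul_one]
  · ext i j
    rcases eq_or_ne i j with rfl | hij
    · simp [fiberwiseOuter, mul_assoc, hε, two_mul]
    · by_cases hf : f i = f j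
      · simp [fiberwiseOuter, hij, hf, mul_assoc, hε_ne i j hf hij]
      · simp [fiberwiseOuter, hij, hf]

end FiberwiseIdempotents

section Construction

variable {K : Type*} [Field K] {k p : ℕ}

/-- Weights on `{0, …, k - 1}` with sum `1` on each of the blocks `{i, i + 1}`, `i ≡ p (mod 2)`; the
formula gives weight `0` to the missing partners `-1` and `k` of truncated blocks. Only the parity
of `p` matters, and the weights for `p` and `p + 1` add up to the constant `1 + 1 / k`. -/
def blockWeight (K : Type*) [Field K] (k p : ℕ) (i : Fin k) : K :=
  (if Even (i.val + p) then (i.val : K) + 1 else (k : K) - i.val) / k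

lemma blockWeight_add_blockWeight_add_one (hk : (k : K) ≠ 0) (i : Fin k) :
    blockWeight K k p i + blockWeight K k (p + 1) i = 1 + 1 / k := by
  by_cases h : Even (i.val + p) <;>
    simp only [blockWeight, ← add_assoc, Nat.even_add_one, h, not_true, not_false_iff, if_true,
      if_false] <;>
    field_simp <;> ring

lemma blockWeight_add_blockWeight_succ (hk : (k : K) ≠ 0) {i : ℕ} (hi : i + 1 < k)
    (h : Even (i + p)) :
    blockWeight K k p ⟨i, by omega⟩ + blockWeight K k p ⟨i + 1, hi⟩ = 1 := by
  have h_succ : ¬Even (i + 1 + p) := by grind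
  simp only [blockWeight, if_pos h, if_neg h_succ, Nat.cast_succ]
  field_simp
  ring

lemma sum_blockWeight (hk : (k : K) ≠ 0) (i : Fin k) :
    ∑ j : Fin k with (j.val + p) / 2 = (i.val + p) / 2, blockWeight K k p j = 1 := by
  have hblock {s : Finset (Fin k)} (hs : ∀ j, (j.val + p) / 2 = (i.val + p) / 2 ↔ j ∈ s) :
      ∑ j : Fin k with (j.val + p) / 2 = (i.val + p) / 2, blockWeight K k p j =
        ∑ j ∈ s, blockWeight K k p j := sum_congr (by ext j; simp [hs]) fun _ _ => rfl
  obtain ⟨i, hi⟩ := i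
  rcases Nat.even_or_odd (i + p) with h | h
  · rcases Nat.lt_or_ge (i + 1) k with hi_succ | hi_last
    · rw [hblock (s := {⟨i, hi⟩, ⟨i + 1, hi_succ⟩}) (by grind),
        sum_pair (by simp), blockWeight_add_blockWeight_succ hk hi_succ h]
    · obtain rfl : k = i + 1 := by omega
      rw [hblock (s := {⟨i, hi⟩}) (by grind), sum_singleton, blockWeight,
        if_pos h, ← Nat.cast_succ, div_self hk]
  · rcases i with _ | i
    · rw [hblock (s := {⟨0, hi⟩}) (by grind), sum_singleton, blockWeight,
        if_neg (Nat.not_even_iff_odd.mpr h), Nat.cast_zero, sub_zero, div_self hk]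
    · rw [hblock (s := {⟨i, by omega⟩, ⟨i + 1, hi⟩}) (by grind),
        sum_pair (by simp), blockWeight_add_blockWeight_succ hk hi (by grind)]

lemma exists_idempotents_add_eq_diagonal_blockWeight (hk : (k : K) ≠ 0) (p : ℕ) :
    ∃ P Q : Matrix (Fin k) (Fin k) K, IsIdempotentElem P ∧ IsIdempotentElem Q ∧
      P + Q = Matrix.diagonal (2 * blockWeight K k p) := by
  refine exists_idempotents_add_eq_diagonal (f := fun i => (i.val + p) / 2)
    (ε := fun i => (-1) ^ i.val) (sum_blockWeight hk) (fun i => ?_) fun i j hij hne => ?_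
  · exact pow_mul_pow_eq_one i.val (by norm_num)
  · rw [← pow_add]
    exact Odd.neg_one_pow (by rw [Ne, Fin.ext_iff] at hne; grind)

lemma exists_idempotents_sum_eq_two_add_two_div (hk : (k : K) ≠ 0) :
    ∃ Q : Fin 4 → Matrix (Fin k) (Fin k) K,
      (∀ j, IsIdempotentElem (Q j)) ∧ ∑ j, Q j = (2 + 2 / k : K) • 1 := by
  obtain ⟨P₀, Q₀, hP₀, hQ₀, h₀⟩ := exists_idempotents_add_eq_diagonal_blockWeight hk 0
  obtain ⟨P₁, Q₁, hP₁, hQ₁, h₁⟩ := exists_idempotents_add_eq_diagonal_blockWeight hk 1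
  refine ⟨![P₀, Q₀, P₁, Q₁], by simp [Fin.forall_fin_succ, *], ?_⟩
  calc ∑ j, ![P₀, Q₀, P₁, Q₁] j = (P₀ + Q₀) + (P₁ + Q₁) := by simp [Fin.sum_univ_four, add_assoc]
    _ = Matrix.diagonal fun i => 2 * (blockWeight K k 0 i + blockWeight K k 1 i) := by
      rw [h₀, h₁, Matrix.diagonal_add]
      simp [mul_add]
    _ = (2 + 2 / k : K) • 1 := by
      rw [Matrix.smul_one_eq_diagonal]
      simp [blockWeight_add_blockWeight_add_one (p := 0) hk, mul_add, div_eq_mul_inv]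

lemma exists_idempotents_sum_eq_two_sub_two_div (hk : (k : K) ≠ 0) :
    ∃ Q : Fin 4 → Matrix (Fin k) (Fin k) K,
      (∀ j, IsIdempotentElem (Q j)) ∧ ∑ j, Q j = (2 - 2 / k : K) • 1 := by
  obtain ⟨Q, hQ, hsum⟩ := exists_idempotents_sum_eq_two_add_two_div hk
  refine ⟨fun j => 1 - Q j, fun j => (hQ j).one_sub, ?_⟩
  rw [sum_sub_distrib, hsum, Fin.sum_univ_four]
  module

end Construction

theorem four_idempotent_matrices_sum_iff_general {K : Type*} [Field K] [CharZero K] (lam : K) :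
    (∃ d : ℕ, 1 ≤ d ∧ ∃ Q : Fin 4 → Matrix (Fin d) (Fin d) K,
      (∀ k, Q k ^ 2 = Q k) ∧ ∑ k, Q k = lam • (1 : Matrix (Fin d) (Fin d) K)) ↔
    (lam = 2 ∨ ∃ k : ℕ, 0 < k ∧ (lam = 2 + 2 / (k : K) ∨ lam = 2 - 2 / (k : K))) := by
  simp only [sq, ← isIdempotentElem_iff]
  constructor
  · rintro ⟨d, hd, Q, hQ, hsum⟩
    refine or_iff_not_imp_left.mpr fun hlam => ?_
    have : Nonempty (Fin d) := ⟨⟨0, hd⟩⟩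
    obtain ⟨k, hk, h⟩ := exists_nat_mul_eq_of_sum_idempotents hQ (sub_ne_zero.mpr hlam)
      (by rw [hsum, add_sub_cancel, Algebra.algebraMap_eq_smul_one])
    have hk' : (k : K) ≠ 0 := Nat.cast_ne_zero.mpr hk.ne'
    refine ⟨k, hk, h.imp (fun h => ?_) fun h => ?_⟩ <;> field_simp <;> linear_combination h
  · rintro (rfl | ⟨k, hk, rfl | rfl⟩)
    · refine ⟨1, le_rfl, ![1, 1, 0, 0], ?_, ?_⟩
      · simp [Fin.forall_fin_succ, IsIdempotentElem.one, IsIdempotentElem.zero]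
      · simp [Fin.sum_univ_four, two_smul]
    · exact ⟨k, hk, exists_idempotents_sum_eq_two_add_two_div (Nat.cast_ne_zero.mpr hk.ne')⟩
    · exact ⟨k, hk, exists_idempotents_sum_eq_two_sub_two_div (Nat.cast_ne_zero.mpr hk.ne')⟩

/-- There exist four idempotent `d×d` complex matrices (for some `d ≥ 1`) summing to
`λ·I` if and only if `λ = 2` or `λ = 2 ± 2/k` for some positive integer `k`. -/
theorem four_idempotent_matrices_sum_iff (lam : ℂ) :
    (∃ d : ℕ, 1 ≤ d ∧ ∃ Q : Fin 4 → Matrix (Fin d) (Fin d) ℂ,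
      (∀ k, Q k ^ 2 = Q k) ∧ ∑ k, Q k = lam • (1 : Matrix (Fin d) (Fin d) ℂ)) ↔
    (lam = 2 ∨ ∃ k : ℕ, 0 < k ∧ (lam = 2 + 2 / (k : ℂ) ∨ lam = 2 - 2 / (k : ℂ))) :=
  four_idempotent_matrices_sum_iff_general lam
end

section
/- Let λ ∈ ℂ. There exist a nonzero complex Hilbert space H and bounded linear operators Q₁, Q₂, Q₃, Q₄ on H with Qₖ² = Qₖ for all k and Q₁ + Q₂ + Q₃ + Q₄ = λ·I if and only if λ = 2 or λ = 2 + 2/k or λ = 2 − 2/k for some positive integer k. -/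
/-!
Write `λ = 2 + μ`. For idempotents `p`, `q` the elements `x = p + q - 1` and `y = p - q` satisfy
`xy = -yx` and `x² + y² = 1`, so the spectrum of `x` is symmetric about `0` away from `±1`. If
`p + q + r + s = λ`, then `r + s - 1 = μ - x`, whose spectrum has the same symmetry. Composing the
two reflections translates spectral values by `μ`; as the spectra are bounded, this walk has to stop
at `±1` in both directions, and if `μ ≠ 0` the distance between the two ends shows `kμ = ±2`.

Conversely, for `μ = 2 / k` the diagonal matrix with entries `2, 2 - μ, …, 2 - (k - 1)μ` and the one
with these entries in reverse order are both sums of two idempotents, and they add up to `2 + μ`.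
The value `2 - μ` is obtained by passing to complements.
-/

open Matrix

/-- `a` is a sum of `n` idempotents, not necessarily distinct or nonzero. -/
def IsSumOfIdempotents {A : Type*} [NonAssocSemiring A] (n : ℕ) (a : A) : Prop :=
  ∃ Q : Fin n → A, (∀ k, IsIdempotentElem (Q k)) ∧ ∑ k, Q k = a

namespace IsSumOfIdempotents

section Semiring

variable {A B : Type*} [NonAssocSemiring A] [NonAssocSemiring B]

theorem of_isIdempotentElem_add {p q : A} (hp : IsIdempotentElem p) (hq : IsIdempotentElem q) :
    IsSumOfIdempotents 2 (p + q) :=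
  ⟨![p, q], by simp [Fin.forall_fin_two, hp, hq], by simp⟩

theorem map {n : ℕ} {a : A} (h : IsSumOfIdempotents n a) {F : Type*} [FunLike F A B]
    [RingHomClass F A B] (f : F) : IsSumOfIdempotents n (f a) := by
  obtain ⟨Q, hQ, rfl⟩ := h
  exact ⟨fun k => f (Q k), fun k => (hQ k).map f, (map_sum f Q _).symm⟩

theorem add {m n : ℕ} {a b : A} (ha : IsSumOfIdempotents m a) (hb : IsSumOfIdempotents n b) :
    IsSumOfIdempotents (m + n) (a + b) := by
  obtain ⟨P, hP, rfl⟩ := ha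
  obtain ⟨Q, hQ, rfl⟩ := hb
  refine ⟨Fin.append P Q, fun k => ?_, by simp [Fin.sum_univ_add]⟩
  induction k using Fin.addCases with
  | left i => simpa using hP i
  | right i => simpa using hQ i

end Semiring

theorem natCast_sub {A : Type*} [Ring A] {n : ℕ} {a : A} (h : IsSumOfIdempotents n a) :
    IsSumOfIdempotents n (n - a) := by
  obtain ⟨Q, hQ, rfl⟩ := h
  exact ⟨fun k => 1 - Q k, fun k => (hQ k).one_sub, by simp⟩

end IsSumOfIdempotents

section Spectrum

theorem isUnit_sub_of_isUnit_add_of_anticommute {A : Type*} [Ring A] {c x y : A}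
    (hxy : x * y = -(y * x)) (hsq : x * x + y * y = 1) (hcx : Commute c x) (hcy : Commute c y)
    (hc : IsUnit (1 - c * c)) (h : IsUnit (c + x)) : IsUnit (c - x) := by
  obtain ⟨u, hu⟩ := h
  have hleft : (c - x) * y = y * u := by
    rw [hu, sub_mul, hxy, hcy.eq, mul_add, sub_neg_eq_add]
  have hright : y * (c - x) = u * y := by
    rw [hu, mul_sub, add_mul, hxy, hcy.eq, sub_eq_add_neg]
  have hyy : y * y - (c - x) * u = 1 - c * c := by
    rw [hu, ← hsq, sub_mul, mul_add, mul_add, hcx.eq]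
    abel
  have hcu : Commute (c - x) u := by
    rw [hu]
    exact ((Commute.refl c).add_right hcx).sub_left (hcx.symm.add_right (Commute.refl x))
  have hmul : (c - x) * (y * ↑u⁻¹ * y - u) = 1 - c * c := by
    rw [mul_sub, ← mul_assoc, ← mul_assoc, hleft, Units.mul_inv_cancel_right, hyy]
  have hmul' : (y * ↑u⁻¹ * y - u) * (c - x) = 1 - c * c := by
    rw [sub_mul, mul_assoc, hright, mul_assoc, Units.inv_mul_cancel_left, ← hcu.eq, hyy]
  have hcomm : Commute (c - x) (y * ↑u⁻¹ * y - u) := hmul.trans hmul'.symm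
  exact (hcomm.isUnit_mul_iff.mp (hmul ▸ hc)).1

variable {K A : Type*} [Field K] [Ring A] [Algebra K A]

theorem neg_mem_spectrum_of_anticommute_s8 {x y : A} (hxy : x * y = -(y * x))
    (hsq : x * x + y * y = 1) {t : K} (ht : t ∈ spectrum K x) (h1 : t ≠ 1) (h2 : t ≠ -1) :
    -t ∈ spectrum K x := by
  by_contra hneg
  rw [spectrum.notMem_iff, map_neg, ← neg_add', IsUnit.neg_iff] at hneg
  have ht' : 1 - t * t ≠ 0 := fun h =>
    (mul_self_eq_one_iff.mp (sub_eq_zero.mp h).symm).elim h1 h2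
  refine ht (isUnit_sub_of_isUnit_add_of_anticommute hxy hsq (Algebra.commutes t x)
    (Algebra.commutes t y) ?_ hneg)
  simpa only [map_sub, map_mul, map_one] using ht'.isUnit.map (algebraMap K A)

theorem neg_mem_spectrum_idempotent_add_sub_one {p q : A} (hp : IsIdempotentElem p)
    (hq : IsIdempotentElem q) {t : K} (ht : t ∈ spectrum K (p + q - 1)) (h1 : t ≠ 1)
    (h2 : t ≠ -1) : -t ∈ spectrum K (p + q - 1) := by
  refine neg_mem_spectrum_of_anticommute_s8 (y := p - q) ?_ ?_ ht h1 h2 <;>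
  · simp only [mul_sub, sub_mul, mul_add, add_mul, hp.eq, hq.eq, one_mul, mul_one]
    abel

theorem mem_spectrum_algebraMap_sub {x : A} {c z : K} :
    z ∈ spectrum K (algebraMap K A c - x) ↔ c - z ∈ spectrum K x := by
  rw [← spectrum.singleton_sub_eq, Set.singleton_sub, Set.mem_image]
  exact ⟨fun ⟨w, hw, h⟩ => by simpa [← h] using hw, fun h => ⟨_, h, sub_sub_cancel c z⟩⟩

end Spectrum

section Walk

theorem exists_add_nsmul_mem_of_isBounded {E : Type*} [NormedAddCommGroup E] [NormedSpace ℝ E]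
    {W X : Set E} (hW : Bornology.IsBounded W) {v w : E} (hv : v ≠ 0)
    (hstep : ∀ z ∈ W, z ∉ X → z + v ∈ W) (hw : w ∈ W) : ∃ n : ℕ, w + n • v ∈ X := by
  by_contra! hX
  have hmem : ∀ n : ℕ, w + n • v ∈ W := by
    intro n
    induction n with
    | zero => simpa using hw
    | succ n ih => simpa only [succ_nsmul, add_assoc] using hstep _ ih (hX n)
  obtain ⟨C, hC⟩ := hW.exists_norm_le
  obtain ⟨n, hn⟩ := exists_nat_gt ((C + ‖w‖) / ‖v‖)
  have hlt : C + ‖w‖ < ‖n • v‖ := by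
    rw [RCLike.norm_nsmul ℝ, nsmul_eq_mul]
    exact (div_lt_iff₀ (norm_pos_iff.mpr hv)).mp hn
  have hle : ‖n • v‖ ≤ C + ‖w‖ := by
    calc ‖n • v‖ = ‖w + n • v - w‖ := by rw [add_sub_cancel_left]
      _ ≤ ‖w + n • v‖ + ‖w‖ := norm_sub_le _ _
      _ ≤ C + ‖w‖ := by gcongr; exact hC _ (hmem n)
  exact hlt.not_ge hle

theorem exists_eq_two_div_of_isBounded {𝕜 : Type*} [RCLike 𝕜] {W : Set 𝕜}
    (hW : Bornology.IsBounded W) (hne : W.Nonempty) {μ : 𝕜} (hμ : μ ≠ 0)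
    (hstep : ∀ z ∈ W, z ≠ 1 → z ≠ -1 → z + μ ∈ W) (hsub : ∀ z ∈ W, μ - z ∈ W) :
    ∃ k : ℕ, 0 < k ∧ (μ = 2 / k ∨ μ = -(2 / k)) := by
  obtain ⟨t, ht⟩ := hne
  have hwalk : ∀ z ∈ W, ∃ n : ℕ, z + n • μ = 1 ∨ z + n • μ = -1 := fun z hz =>
    exists_add_nsmul_mem_of_isBounded (X := {1, -1}) hW hμ
      (fun w hw hX => hstep w hw (fun h => hX (.inl h)) fun h => hX (.inr h)) hz
  obtain ⟨n, hn⟩ := hwalk t ht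
  -- The walk from `μ - t` is, up to the reflection `z ↦ μ - z`, the walk from `t` backwards.
  obtain ⟨m, hm⟩ := hwalk (μ - t) (hsub t ht)
  have hk : ((n + m + 1 : ℕ) : 𝕜) ≠ 0 := Nat.cast_ne_zero.mpr (n + m).succ_ne_zero
  have hkμ : ((n + m + 1 : ℕ) : 𝕜) * μ ≠ 0 := mul_ne_zero hk hμ
  refine ⟨n + m + 1, (n + m).succ_pos, ?_⟩
  rw [eq_div_iff hk, ← neg_div, eq_div_iff hk]
  simp only [nsmul_eq_mul] at hn hm
  push_cast at hkμ ⊢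
  rcases hn with hn | hn <;> rcases hm with hm | hm
  · exact .inl (by linear_combination hn + hm)
  · exact absurd (by linear_combination hn + hm) hkμ
  · exact absurd (by linear_combination hn + hm) hkμ
  · exact .inr (by linear_combination hn + hm)

end Walk

section Necessity

variable {A : Type*} [NormedRing A] [NormedAlgebra ℂ A] [Nontrivial A] {lam : ℂ}

theorem exists_sub_two_eq_two_div_of_isSumOfIdempotents_four_of_complete [CompleteSpace A]
    (h : IsSumOfIdempotents 4 (algebraMap ℂ A lam)) (hlam : lam ≠ 2) :
    ∃ k : ℕ, 0 < k ∧ (lam - 2 = 2 / k ∨ lam - 2 = -(2 / k)) := by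
  obtain ⟨Q, hQ, hsum⟩ := h
  set x := Q 0 + Q 1 - 1
  set x' := Q 2 + Q 3 - 1
  have hx : x' = algebraMap ℂ A (lam - 2) - x := by
    rw [map_sub, ← hsum, map_ofNat, Fin.sum_univ_four, ← one_add_one_eq_two]
    simp only [x, x']
    abel
  have hmem (z : ℂ) : z ∈ spectrum ℂ x' ↔ lam - 2 - z ∈ spectrum ℂ x := by
    rw [hx, mem_spectrum_algebraMap_sub]
  have hmem' (z : ℂ) : lam - 2 - z ∈ spectrum ℂ x' ↔ z ∈ spectrum ℂ x := by
    rw [hmem, sub_sub_cancel]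
  refine exists_eq_two_div_of_isBounded (W := spectrum ℂ x ∪ spectrum ℂ x')
    ((spectrum.isBounded x).union (spectrum.isBounded x')) (spectrum.nonempty x).inl
    (sub_ne_zero.mpr hlam) ?_ ?_
  · rintro z (hz | hz) h1 h2
    · have := neg_mem_spectrum_idempotent_add_sub_one (hQ 0) (hQ 1) hz h1 h2
      exact .inr (by simpa [add_comm] using (hmem' (-z)).mpr this)
    · have := neg_mem_spectrum_idempotent_add_sub_one (hQ 2) (hQ 3) hz h1 h2
      exact .inl (by simpa [add_comm] using (hmem (-z)).mp this)
  · rintro z (hz | hz)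
    exacts [.inr ((hmem' z).mpr hz), .inl ((hmem z).mp hz)]

theorem exists_sub_two_eq_two_div_of_isSumOfIdempotents_four
    (h : IsSumOfIdempotents 4 (algebraMap ℂ A lam)) (hlam : lam ≠ 2) :
    ∃ k : ℕ, 0 < k ∧ (lam - 2 = 2 / k ∨ lam - 2 = -(2 / k)) := by
  have : Nontrivial (UniformSpace.Completion A) :=
    (UniformSpace.Completion.coe_injective A).nontrivial
  -- Mathlib provides this instance for commutative `A` only.
  let _ : NormedAlgebra ℂ (UniformSpace.Completion A) := { norm_smul_le := norm_smul_le }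
  exact exists_sub_two_eq_two_div_of_isSumOfIdempotents_four_of_complete
    (A := UniformSpace.Completion A) (h.map UniformSpace.Completion.coeRingHom) hlam

end Necessity

section Construction

-- If this idempotent is `p` and the one for `-s` is `q`, then `d = p + q - 1` and
-- `(1 - d) * s = p - q`.
theorem isIdempotentElem_invOf_two_smul {R A : Type*} [CommRing R] [Invertible (2 : R)] [Ring A]
    [Algebra R A] {s d : A} (hs : s * s = 1) (h : (1 - d) * (s * d + d * s) = 0) :
    IsIdempotentElem (⅟(2 : R) • (1 + d + (1 - d) * s)) := by
  have hd : (1 - d) * s * d = -((1 - d) * d * s) := by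
    rw [mul_add, ← mul_assoc, ← mul_assoc] at h
    exact eq_neg_of_add_eq_zero_left h
  have hadd : (1 - d) * s * (1 + d) = (1 - d) * (1 - d) * s := by
    rw [mul_add, hd]
    noncomm_ring
  have hsub : (1 - d) * s * (1 - d) = (1 - d) * (1 + d) * s := by
    rw [mul_sub, hd]
    noncomm_ring
  have hsq : (1 + d + (1 - d) * s) * (1 + d + (1 - d) * s) = (2 : R) • (1 + d + (1 - d) * s) :=
    calc
      _ = (1 + d) * (1 + d) + (1 + d) * (1 - d) * s + (1 - d) * s * (1 + d)
            + (1 - d) * s * (1 - d) * s := by noncomm_ring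
      _ = (1 + d) * (1 + d) + (1 + d) * (1 - d) * s + (1 - d) * (1 - d) * s
            + (1 - d) * (1 + d) := by rw [hadd, hsub, mul_assoc _ s s, hs, mul_one]
      _ = (2 : R) • (1 + d + (1 - d) * s) := by rw [two_smul]; noncomm_ring
  rw [IsIdempotentElem, smul_mul_smul_comm, hsq, smul_smul, mul_assoc, invOf_mul_self, mul_one]

theorem isSumOfIdempotents_two_one_add {R A : Type*} [CommRing R] [Invertible (2 : R)] [Ring A]
    [Algebra R A] {s d : A} (hs : s * s = 1) (h : (1 - d) * (s * d + d * s) = 0) :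
    IsSumOfIdempotents 2 (1 + d) := by
  have hneg : (1 - d) * (-s * d + d * -s) = 0 := by
    rw [neg_mul, mul_neg, ← neg_add, mul_neg, h, neg_zero]
  convert IsSumOfIdempotents.of_isIdempotentElem_add (isIdempotentElem_invOf_two_smul (R := R) hs h)
    (isIdempotentElem_invOf_two_smul (R := R) ((neg_mul_neg s s).trans hs) hneg) using 1
  rw [← smul_add, mul_neg, add_add_add_comm, add_neg_cancel, add_zero, ← two_smul R, smul_smul,
    invOf_mul_self, one_smul]

theorem isSumOfIdempotents_two_diagonal {ι R : Type*} [Fintype ι] [DecidableEq ι] [CommRing R]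
    [Invertible (2 : R)] {σ : Equiv.Perm ι} (hσ : Function.Involutive σ) {t : ι → R}
    (ht : ∀ i, t i = 1 ∨ t (σ i) = -t i) : IsSumOfIdempotents 2 (diagonal fun i => 1 + t i) := by
  have hs : σ.permMatrix R * σ.permMatrix R = 1 := by
    rw [← permMatrix_mul, show σ * σ = 1 from Equiv.ext hσ, permMatrix_one]
  rw [← diagonal_add, diagonal_one]
  refine isSumOfIdempotents_two_one_add (R := R) hs ?_
  rw [← diagonal_one, diagonal_sub]
  ext i j
  have hentry : σ.permMatrix R i j = if σ i = j then 1 else 0 := by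
    simp [Equiv.Perm.permMatrix, PEquiv.toMatrix_apply]
  rw [diagonal_mul, Matrix.add_apply, mul_diagonal, diagonal_mul, hentry, Matrix.zero_apply]
  rcases eq_or_ne (σ i) j with rfl | hij
  · rcases ht i with h | h <;> simp [h]
  · simp [hij]

variable {R : Type*} [CommRing R] [Invertible (2 : R)] {k : ℕ} [NeZero k] {μ : R}

theorem isSumOfIdempotents_two_diagonal_two_sub (hμ : k * μ = 2) :
    IsSumOfIdempotents 2 (diagonal fun i : Fin k => 2 - (i : ℕ) * μ) := by
  have ht (i : Fin k) : 1 - (i : ℕ) * μ = 1 ∨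
      1 - ((-i : Fin k) : ℕ) * μ = -(1 - (i : ℕ) * μ) := by
    rw [Fin.val_neg]
    split_ifs with hi
    · exact .inl (by simp [hi])
    · right
      rw [Nat.cast_sub i.is_lt.le]
      linear_combination -hμ
  convert isSumOfIdempotents_two_diagonal (σ := Equiv.neg (Fin k)) neg_neg ht using 3
  ring

theorem isSumOfIdempotents_four_two_add (hμ : k * μ = 2) :
    IsSumOfIdempotents 4 (algebraMap R (Matrix (Fin k) (Fin k) R) (2 + μ)) := by
  have h := isSumOfIdempotents_two_diagonal_two_sub hμ
  convert h.add (h.map (reindexAlgEquiv R R Fin.revPerm)) using 1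
  rw [coe_reindexAlgEquiv, reindex_apply, submatrix_diagonal_equiv, diagonal_add,
    algebraMap_eq_diagonal]
  congr 1
  ext i
  simp only [Pi.algebraMap_apply, Algebra.algebraMap_self, RingHom.id_apply, Function.comp_apply,
    Fin.revPerm_symm, Fin.revPerm_apply, Fin.val_rev, Nat.cast_sub i.is_lt, Nat.cast_succ]
  linear_combination hμ

theorem isSumOfIdempotents_four_two_sub (hμ : k * μ = 2) :
    IsSumOfIdempotents 4 (algebraMap R (Matrix (Fin k) (Fin k) R) (2 - μ)) := by
  have h := (isSumOfIdempotents_four_two_add hμ).natCast_sub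
  rwa [← map_natCast (algebraMap R (Matrix (Fin k) (Fin k) R)), ← map_sub,
    show ((4 : ℕ) : R) - (2 + μ) = 2 - μ by push_cast; ring] at h

theorem isSumOfIdempotents_four_two {A : Type*} [NonAssocSemiring A] :
    IsSumOfIdempotents 4 (2 : A) := by
  have h : IsSumOfIdempotents 2 (1 + 0 : A) := .of_isIdempotentElem_add .one .zero
  simpa [one_add_one_eq_two] using h.add h

end Construction

theorem four_bounded_idempotents_sum_iff_general (lam : ℂ) : List.TFAE [
    lam = 2 ∨ ∃ k : ℕ, 0 < k ∧ (lam = 2 + 2 / (k : ℂ) ∨ lam = 2 - 2 / (k : ℂ)),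
    ∃ n : ℕ, 0 < n ∧ IsSumOfIdempotents 4 (algebraMap ℂ (Matrix (Fin n) (Fin n) ℂ) lam),
    ∃ (H : Type) (_ : NormedAddCommGroup H) (_ : InnerProductSpace ℂ H) (_ : CompleteSpace H)
      (_ : Nontrivial H), IsSumOfIdempotents 4 (algebraMap ℂ (H →L[ℂ] H) lam),
    ∃ (A : Type) (_ : NormedRing A) (_ : NormedAlgebra ℂ A) (_ : Nontrivial A),
      IsSumOfIdempotents 4 (algebraMap ℂ A lam)] := by
  tfae_have 1 → 2 := by
    rintro (rfl | ⟨k, hk, rfl | rfl⟩)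
    · exact ⟨1, one_pos, by simpa only [map_ofNat] using isSumOfIdempotents_four_two⟩
    all_goals
      have : NeZero k := ⟨hk.ne'⟩
      have hμ : (k : ℂ) * (2 / k) = 2 := mul_div_cancel₀ _ (NeZero.ne _)
    · exact ⟨k, hk, isSumOfIdempotents_four_two_add hμ⟩
    · exact ⟨k, hk, isSumOfIdempotents_four_two_sub hμ⟩
  tfae_have 2 → 3 := by
    rintro ⟨n, hn, h⟩
    have : Nonempty (Fin n) := ⟨⟨0, hn⟩⟩
    refine ⟨EuclideanSpace ℂ (Fin n), inferInstance, inferInstance, inferInstance,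
      inferInstance, ?_⟩
    simpa using h.map (toEuclideanCLM (n := Fin n) (𝕜 := ℂ)).toAlgEquiv
  tfae_have 3 → 4 := fun ⟨H, _, _, _, _, h⟩ =>
    ⟨H →L[ℂ] H, inferInstance, inferInstance, inferInstance, h⟩
  tfae_have 4 → 1 := by
    rintro ⟨A, _, _, _, h⟩
    refine or_iff_not_imp_left.mpr fun hlam => ?_
    obtain ⟨k, hk, hlam'⟩ := exists_sub_two_eq_two_div_of_isSumOfIdempotents_four h hlam
    exact ⟨k, hk, hlam'.imp sub_eq_iff_eq_add'.mp fun h => by linear_combination h⟩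
  tfae_finish

/-- There exist four bounded idempotent operators on a nonzero complex Hilbert space
summing to `λ·I` if and only if `λ = 2` or `λ = 2 ± 2/k` for some positive integer `k`. -/
theorem four_bounded_idempotents_sum_iff (lam : ℂ) :
    (∃ (H : Type) (_ : NormedAddCommGroup H) (_ : InnerProductSpace ℂ H)
      (_ : CompleteSpace H) (_ : Nontrivial H) (Q : Fin 4 → H →L[ℂ] H),
      (∀ k, Q k ^ 2 = Q k) ∧ ∑ k, Q k = lam • (1 : H →L[ℂ] H)) ↔
    (lam = 2 ∨ ∃ k : ℕ, 0 < k ∧ (lam = 2 + 2 / (k : ℂ) ∨ lam = 2 - 2 / (k : ℂ))) := by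
  simpa only [IsSumOfIdempotents, IsIdempotentElem, ← sq, Algebra.algebraMap_eq_smul_one]
    using (four_bounded_idempotents_sum_iff_general lam).out 2 0
end

section
/- Let A be a unital associative algebra over ℂ, let λ ∈ ℂ with λ ≠ 2, and let x₁, x₂, x₃ ∈ A satisfy the anticommutation relations x₁x₂ + x₂x₁ = x₃, x₂x₃ + x₃x₂ = x₁, x₃x₁ + x₁x₃ = x₂, together with (λ−2)²(x₁² + x₂² + x₃²) = (1 − (λ−2)²/4)·1. Define Q₁ = ((λ−2)/2)(−x₁+x₂+x₃) + (λ/4)·1, Q₂ = ((λ−2)/2)(x₁−x₂+x₃) + (λ/4)·1, Q₃ = ((λ−2)/2)(x₁+x₂−x₃) + (λ/4)·1, Q₄ = ((λ−2)/2)(−x₁−x₂−x₃) + (λ/4)·1. Then Qᵢ² = Qᵢ for i = 1,2,3,4 and Q₁ + Q₂ + Q₃ + Q₄ = λ·1. -/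
/-!
Put `s = λ / 4`, `c = x₁² + x₂² + x₃²` and `v = x₁ + x₂ + x₃`. The anticommutation relations say
that `v² = c + v`, so `Q = (1 - 2s)v + s` satisfies `Q² = (1 - 2s)²c + s² + (1 - 2s)v`. In terms of
`s` the Casimir condition becomes free of denominators, `(1 - 2s)²c = s(1 - s)`, and turns the right
hand side into `Q`. Changing the sign of two of the `xᵢ` preserves both the relations and `c`, so
this single computation produces all four idempotents; their four vectors `v` add up to zero.
-/

/-- The defining relations of the graded Lie algebra `so(3)`: the anticommutator of any two of the
three elements is the third one. They are imposed on elements of an arbitrary type with a product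
and a sum, so that they make sense in nonassociative algebras too. -/
structure IsGradedSO3Triple {A : Type*} [Mul A] [Add A] (x₁ x₂ x₃ : A) : Prop where
  anticomm₁₂ : x₁ * x₂ + x₂ * x₁ = x₃
  anticomm₂₃ : x₂ * x₃ + x₃ * x₂ = x₁
  anticomm₃₁ : x₃ * x₁ + x₁ * x₃ = x₂

theorem isIdempotentElem_smul_add_smul_one {R A : Type*} [CommRing R] [NonAssocRing A] [Module R A]
    [IsScalarTower R A A] [SMulCommClass R A A] {s : R} {c v : A} (hv : v * v = c + v)
    (hc : (1 - 2 * s) ^ 2 • c = (s * (1 - s)) • (1 : A)) :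
    IsIdempotentElem ((1 - 2 * s) • v + s • (1 : A)) := by
  have expand : ((1 - 2 * s) • v + s • (1 : A)) * ((1 - 2 * s) • v + s • (1 : A)) =
      (1 - 2 * s) ^ 2 • (v * v) + (2 * s * (1 - 2 * s)) • v + s ^ 2 • (1 : A) := by
    simp only [add_mul, mul_add, smul_mul_smul_comm, mul_one, one_mul]
    module
  rw [IsIdempotentElem, expand, hv]
  linear_combination (norm := module) hc

namespace IsGradedSO3Triple

theorem rotate {A : Type*} [Mul A] [Add A] {x₁ x₂ x₃ : A} (h : IsGradedSO3Triple x₁ x₂ x₃) :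
    IsGradedSO3Triple x₂ x₃ x₁ :=
  ⟨h.anticomm₂₃, h.anticomm₃₁, h.anticomm₁₂⟩

theorem add_add_mul_self {A : Type*} [NonUnitalNonAssocSemiring A] {x₁ x₂ x₃ : A}
    (h : IsGradedSO3Triple x₁ x₂ x₃) :
    (x₁ + x₂ + x₃) * (x₁ + x₂ + x₃) =
      (x₁ * x₁ + x₂ * x₂ + x₃ * x₃) + (x₁ + x₂ + x₃) :=
  calc
    (x₁ + x₂ + x₃) * (x₁ + x₂ + x₃) =
        (x₁ * x₁ + x₂ * x₂ + x₃ * x₃) +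
          ((x₂ * x₃ + x₃ * x₂) + (x₃ * x₁ + x₁ * x₃) + (x₁ * x₂ + x₂ * x₁)) := by
      simp only [add_mul, mul_add]
      abel
    _ = (x₁ * x₁ + x₂ * x₂ + x₃ * x₃) + (x₁ + x₂ + x₃) := by
      rw [h.anticomm₁₂, h.anticomm₂₃, h.anticomm₃₁]

section Neg

variable {A : Type*} [NonUnitalNonAssocRing A] {x₁ x₂ x₃ : A}

theorem neg₂₃ (h : IsGradedSO3Triple x₁ x₂ x₃) : IsGradedSO3Triple x₁ (-x₂) (-x₃) where
  anticomm₁₂ := by rw [mul_neg, neg_mul, ← neg_add, h.anticomm₁₂]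
  anticomm₂₃ := by rw [neg_mul_neg, neg_mul_neg, h.anticomm₂₃]
  anticomm₃₁ := by rw [mul_neg, neg_mul, ← neg_add, h.anticomm₃₁]

theorem neg₁₃ (h : IsGradedSO3Triple x₁ x₂ x₃) : IsGradedSO3Triple (-x₁) x₂ (-x₃) :=
  h.rotate.neg₂₃.rotate.rotate

theorem neg₁₂ (h : IsGradedSO3Triple x₁ x₂ x₃) : IsGradedSO3Triple (-x₁) (-x₂) x₃ :=
  h.rotate.rotate.neg₂₃.rotate

end Neg

theorem isIdempotentElem {R A : Type*} [CommRing R] [NonAssocRing A] [Module R A]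
    [IsScalarTower R A A] [SMulCommClass R A A] {s : R} {x₁ x₂ x₃ : A}
    (h : IsGradedSO3Triple x₁ x₂ x₃)
    (hcas : (1 - 2 * s) ^ 2 • (x₁ * x₁ + x₂ * x₂ + x₃ * x₃) = (s * (1 - s)) • (1 : A)) :
    IsIdempotentElem ((1 - 2 * s) • (x₁ + x₂ + x₃) + s • (1 : A)) :=
  isIdempotentElem_smul_add_smul_one h.add_add_mul_self hcas

end IsGradedSO3Triple

theorem graded_so3_gives_four_idempotents_general {R A : Type*} [CommRing R] [NonAssocRing A]
    [Module R A] [IsScalarTower R A A] [SMulCommClass R A A] {s : R} {x₁ x₂ x₃ : A}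
    (h : IsGradedSO3Triple x₁ x₂ x₃)
    (hcas : (1 - 2 * s) ^ 2 • (x₁ * x₁ + x₂ * x₂ + x₃ * x₃) = (s * (1 - s)) • (1 : A))
    {Q₁ Q₂ Q₃ Q₄ : A}
    (hQ₁ : Q₁ = (1 - 2 * s) • (x₁ + -x₂ + -x₃) + s • (1 : A))
    (hQ₂ : Q₂ = (1 - 2 * s) • (-x₁ + x₂ + -x₃) + s • (1 : A))
    (hQ₃ : Q₃ = (1 - 2 * s) • (-x₁ + -x₂ + x₃) + s • (1 : A))
    (hQ₄ : Q₄ = (1 - 2 * s) • (x₁ + x₂ + x₃) + s • (1 : A)) :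
    (IsIdempotentElem Q₁ ∧ IsIdempotentElem Q₂ ∧ IsIdempotentElem Q₃ ∧ IsIdempotentElem Q₄) ∧
    Q₁ + Q₂ + Q₃ + Q₄ = (4 * s) • (1 : A) := by
  subst hQ₁ hQ₂ hQ₃ hQ₄
  refine ⟨⟨h.neg₂₃.isIdempotentElem ?_, h.neg₁₃.isIdempotentElem ?_,
    h.neg₁₂.isIdempotentElem ?_, h.isIdempotentElem hcas⟩, by module⟩ <;>
  simpa only [neg_mul_neg] using hcas

/-- Given elements `x₁, x₂, x₃` of a unital ℂ-algebra satisfying the graded `so(3)`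
anticommutation relations and the Casimir condition, the four elements `Qᵢ` defined
below are idempotents summing to `λ·1`. -/
theorem graded_so3_gives_four_idempotents {A : Type*} [Ring A] [Algebra ℂ A]
    (lam : ℂ) (hlam : lam ≠ 2) (x₁ x₂ x₃ : A)
    (h₁₂ : x₁ * x₂ + x₂ * x₁ = x₃)
    (h₂₃ : x₂ * x₃ + x₃ * x₂ = x₁)
    (h₃₁ : x₃ * x₁ + x₁ * x₃ = x₂)
    (hcas : ((lam - 2) ^ 2) • (x₁ ^ 2 + x₂ ^ 2 + x₃ ^ 2) =
      (1 - (lam - 2) ^ 2 / 4) • (1 : A))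
    (Q₁ Q₂ Q₃ Q₄ : A)
    (hQ₁ : Q₁ = ((lam - 2) / 2) • (-x₁ + x₂ + x₃) + (lam / 4) • (1 : A))
    (hQ₂ : Q₂ = ((lam - 2) / 2) • (x₁ - x₂ + x₃) + (lam / 4) • (1 : A))
    (hQ₃ : Q₃ = ((lam - 2) / 2) • (x₁ + x₂ - x₃) + (lam / 4) • (1 : A))
    (hQ₄ : Q₄ = ((lam - 2) / 2) • (-x₁ - x₂ - x₃) + (lam / 4) • (1 : A)) :
    (Q₁ ^ 2 = Q₁ ∧ Q₂ ^ 2 = Q₂ ∧ Q₃ ^ 2 = Q₃ ∧ Q₄ ^ 2 = Q₄) ∧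
    Q₁ + Q₂ + Q₃ + Q₄ = lam • (1 : A) := by
  have hcas' : (1 - 2 * (lam / 4)) ^ 2 • (x₁ * x₁ + x₂ * x₂ + x₃ * x₃) =
      (lam / 4 * (1 - lam / 4)) • (1 : A) := by
    simp only [← sq]
    linear_combination (norm := module) (1 / 4 : ℂ) • hcas
  obtain ⟨hQ, hsum⟩ := graded_so3_gives_four_idempotents_general ⟨h₁₂, h₂₃, h₃₁⟩ hcas'
    (hQ₁.trans (by module)) (hQ₂.trans (by module)) (hQ₃.trans (by module)) (hQ₄.trans (by module))
  exact ⟨by simpa only [IsIdempotentElem, ← sq] using hQ, hsum.trans (by module)⟩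
end

section
/- Let d ≥ 1, let λ ∈ ℂ with λ ≠ 2, and let Q₁, Q₂, Q₃, Q₄ be d×d complex matrices with Qₖ² = Qₖ for all k and Q₁ + Q₂ + Q₃ + Q₄ = λ·I. Then there exists an invertible d×d complex matrix S such that S⁻¹QₖS is Hermitian (equal to its conjugate transpose) for every k = 1,2,3,4. -/
/-!
For idempotents `P`, `Q` the elements `A = P + Q - 1` and `B = P - Q` anticommute and satisfy
`A² + B² = 1`. Taking traces shows that `λ` is real, and passing to `1 - Qₖ` we may assume
`μ = λ - 2 > 0`, so that the four idempotents amount to two such pairs `(A, B)` and `(C, D)` with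
`A + C = μ`. An eigenvalue `a` of `A` (or a Jordan block for `a`) is moved by `B` to `-a` and then
by `D` to `a + 2μ`. Since the spectrum is finite, this forces `A` to be diagonalizable with
`μ - 1 ≤ A ≤ 1`.

Once `A` is diagonal, the "polar parts" `J` of `B` and `J'` of `D` are involutions up to a
projection, and `J' J` raises eigenvalues of `A` by `2μ`, hence is nilpotent. Only finitely many
alternating words `w` in `J` and `J'` are therefore nonzero, and the sum `H` of all `w* w` is a
positive definite matrix for which `A`, `B`, `D` are self-adjoint. Conjugating by a square root of
`H` makes them Hermitian.
-/

namespace FourIdempotents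

open Matrix Module
open scoped ComplexOrder MatrixOrder Matrix.Norms.L2Operator

/-- `A` and `B` anticommute and `A² + B² = 1`. Two idempotents `P` and `Q` are encoded by the pair
`P + Q - 1`, `P - Q`. -/
structure IsAnticommutingPair {R : Type*} [Ring R] (A B : R) : Prop where
  semiconjBy : SemiconjBy B A (-A)
  mul_self_eq : B * B = 1 - A * A

theorem isAnticommutingPair_of_isIdempotentElem {R : Type*} [Ring R] {P Q : R}
    (hP : IsIdempotentElem P) (hQ : IsIdempotentElem Q) :
    IsAnticommutingPair (P + Q - 1) (P - Q) where
  semiconjBy := by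
    simp only [SemiconjBy, mul_add, mul_sub, sub_mul, neg_mul, add_mul, hP.eq, hQ.eq, mul_one,
      one_mul]
    abel
  mul_self_eq := by
    simp only [mul_add, mul_sub, sub_mul, add_mul, hP.eq, hQ.eq, mul_one, one_mul]
    abel

theorem IsAnticommutingPair.mul_eq_zero_of_mul_mul_eq_zero {R : Type*} [Ring R] {A B X : R}
    (h : IsAnticommutingPair A B) (hA : IsUnit (1 + A)) (hX : B * B * X = 0) : B * X = 0 := by
  have hAX : A * X = X := by
    have h₀ : (1 + A) * (X - A * X) = 0 := by
      rw [← hX, h.mul_self_eq]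
      noncomm_ring
    exact (sub_eq_zero.1 (hA.mul_right_eq_zero.1 h₀)).symm
  refine hA.mul_right_eq_zero.1 ?_
  calc (1 + A) * (B * X) = B * X - -A * B * X := by noncomm_ring
    _ = B * X - B * (A * X) := by rw [← h.semiconjBy.eq, mul_assoc]
    _ = 0 := by rw [hAX, sub_self]

section Spectrum

variable {K V : Type*} [Field K] [AddCommGroup V] [Module K V] {A B D : End K V} {a μ : K}

/-- The endomorphism `A` has no Jordan block of size at least two for `a`. -/
def IsSemisimpleAt (A : End K V) (a : K) : Prop :=
  LinearMap.ker ((A - a • 1) ^ 2) ≤ LinearMap.ker (A - a • 1)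

theorem isSemisimpleAt_smul_one_sub :
    IsSemisimpleAt (μ • 1 - A) a ↔ IsSemisimpleAt A (μ - a) := by
  have h : μ • 1 - A - a • 1 = -(A - (μ - a) • 1) := by module
  simp only [IsSemisimpleAt, h, neg_sq, LinearMap.ker_neg]

theorem hasEigenvalue_smul_one_sub :
    (μ • 1 - A).HasEigenvalue a ↔ A.HasEigenvalue (μ - a) := by
  have h : μ • 1 - A - a • 1 = -(A - (μ - a) • 1) := by module
  simp only [End.hasEigenvalue_iff, End.eigenspace_def, h, LinearMap.ker_neg]

theorem hasEigenvalue_of_not_isSemisimpleAt (h : ¬ IsSemisimpleAt A a) : A.HasEigenvalue a := by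
  contrapose! h
  rw [End.hasEigenvalue_iff, not_not, End.eigenspace_def] at h
  rw [IsSemisimpleAt, pow_two, End.mul_eq_comp, LinearMap.ker_comp, h, Submodule.comap_bot, h]

theorem IsAnticommutingPair.apply_apply (h : IsAnticommutingPair A B) (v : V) :
    A (B v) = -B (A v) := by
  simpa only [End.mul_apply, LinearMap.neg_apply, neg_mul, eq_neg_iff_add_eq_zero, add_comm] using
    congr($h.semiconjBy.eq v)

theorem IsAnticommutingPair.apply_self_apply (h : IsAnticommutingPair A B) (v : V) :
    B (B v) = v - A (A v) := by
  simpa only [End.mul_apply, LinearMap.sub_apply, End.one_apply] using congr($h.mul_self_eq v)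

theorem IsAnticommutingPair.hasEigenvalue_neg (h : IsAnticommutingPair A B)
    (ha : A.HasEigenvalue a) (ha1 : a ^ 2 ≠ 1) : A.HasEigenvalue (-a) := by
  obtain ⟨v, hv⟩ := ha.exists_hasEigenvector
  have hAv : A v = a • v := hv.apply_eq_smul
  have hBBv : B (B v) = (1 - a ^ 2) • v := by
    rw [h.apply_self_apply, hAv, map_smul, hAv]
    module
  refine End.hasEigenvalue_of_hasEigenvector (x := B v) ⟨End.mem_eigenspace_iff.2 ?_, fun h₀ ↦ ?_⟩
  · rw [h.apply_apply, hAv, map_smul, neg_smul]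
  · rw [h₀, map_zero, eq_comm, smul_eq_zero_iff_left hv.2, sub_eq_zero] at hBBv
    exact ha1 hBBv.symm

theorem IsAnticommutingPair.isSemisimpleAt_of_neg (h : IsAnticommutingPair A B)
    (hA : ¬ A.HasEigenvalue (-1)) (ha : IsSemisimpleAt A (-a)) : IsSemisimpleAt A a := by
  have hker (u : V) (hu : (A - (-1 : K) • 1) u = 0) : u = 0 := by
    rw [End.hasEigenvalue_iff, not_not, End.eigenspace_def] at hA
    exact LinearMap.ker_eq_bot'.1 hA u hu
  have hB (u : V) : (A - (-a) • 1) (B u) = -B ((A - a • 1) u) := by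
    simp only [LinearMap.sub_apply, LinearMap.smul_apply, End.one_apply, h.apply_apply, map_sub,
      map_smul]
    module
  intro v hv
  rw [LinearMap.mem_ker, pow_two, End.mul_apply] at hv
  have hBv : (A - (-a) • 1) (B v) = 0 := by
    refine LinearMap.mem_ker.1 (ha ?_)
    rw [LinearMap.mem_ker, pow_two, End.mul_apply, hB, map_neg, hB, hv, map_zero, neg_zero,
      neg_zero]
  rw [LinearMap.mem_ker]
  set w := (A - a • 1) v with hw
  have hAw : A w = a • w := by
    rwa [LinearMap.sub_apply, LinearMap.smul_apply, End.one_apply, sub_eq_zero] at hv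
  have hsq : (1 - a ^ 2) • w = 0 := by
    calc (1 - a ^ 2) • w = w - A (A w) := by
          rw [hAw, map_smul, hAw]
          module
      _ = B (B w) := (h.apply_self_apply w).symm
      _ = 0 := by rw [neg_eq_zero.1 ((hB v).symm.trans hBv), map_zero]
  refine (smul_eq_zero.1 hsq).elim (fun ha1 ↦ ?_) id
  rcases sq_eq_one_iff.1 (sub_eq_zero.1 ha1).symm with rfl | rfl
  · have hAAv : A (A v) = v := by
      rw [eq_comm, ← sub_eq_zero, ← h.apply_self_apply, hker _ hBv, map_zero]
    refine hker w ?_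
    rw [hw]
    simp only [LinearMap.sub_apply, LinearMap.smul_apply, End.one_apply, map_sub, map_smul, hAAv]
    module
  · exact hker w hv

theorem eigenvalue_le_one [PartialOrder K] [IsStrictOrderedRing K] [FiniteDimensional K V]
    (hAB : IsAnticommutingPair A B) (hCD : IsAnticommutingPair (μ • 1 - A) D) (hμ : 0 < μ)
    (ha : A.HasEigenvalue a) : a ≤ 1 := by
  by_contra hbad
  obtain ⟨b, ⟨hb, hb1⟩, hmax⟩ :=
    (A.finite_hasEigenvalue.subset
      (Set.sep_subset {a | A.HasEigenvalue a} (¬ · ≤ 1))).exists_maximal ⟨a, ha, hbad⟩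
  have hsq {c : K} (hc : ¬ c ≤ 1) : c ^ 2 ≠ 1 := by
    intro hc1
    rcases sq_eq_one_iff.1 hc1 with rfl | rfl
    exacts [hc le_rfl, hc (neg_le_self zero_le_one)]
  have hbμ : ¬ b + μ ≤ 1 := fun h ↦ hb1 ((le_add_of_nonneg_right hμ.le).trans h)
  have hC : (μ • 1 - A).HasEigenvalue (b + μ) :=
    hasEigenvalue_smul_one_sub.2 (by simpa using hAB.hasEigenvalue_neg hb (hsq hb1))
  have hb' : A.HasEigenvalue (b + μ + μ) := by
    convert hasEigenvalue_smul_one_sub.1 (hCD.hasEigenvalue_neg hC (hsq hbμ)) using 1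
    ring
  have hlt : b < b + μ + μ := (lt_add_of_pos_right b hμ).trans (lt_add_of_pos_right _ hμ)
  exact hlt.not_ge (hmax ⟨hb', fun h ↦ hb1 (hlt.le.trans h)⟩ hlt.le)

theorem sub_eigenvalue_le_one [PartialOrder K] [IsStrictOrderedRing K]
    [FiniteDimensional K V] (hAB : IsAnticommutingPair A B)
    (hCD : IsAnticommutingPair (μ • 1 - A) D) (hμ : 0 < μ) (ha : A.HasEigenvalue a) :
    μ - a ≤ 1 :=
  eigenvalue_le_one hCD (by rwa [sub_sub_cancel]) hμ
    (hasEigenvalue_smul_one_sub.2 (by rwa [sub_sub_cancel]))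

theorem isSemisimpleAt_of_pairs [PartialOrder K] [IsStrictOrderedRing K] [FiniteDimensional K V]
    (hAB : IsAnticommutingPair A B) (hCD : IsAnticommutingPair (μ • 1 - A) D) (hμ : 0 < μ)
    (a : K) : IsSemisimpleAt A a := by
  have hA : ¬ A.HasEigenvalue (-1) := fun h ↦ by
    have := sub_eigenvalue_le_one hAB hCD hμ h
    rw [sub_neg_eq_add, add_le_iff_nonpos_left] at this
    exact this.not_gt hμ
  have hC : ¬ (μ • 1 - A).HasEigenvalue (-1) := fun h ↦ by
    have := eigenvalue_le_one hAB hCD hμ (hasEigenvalue_smul_one_sub.1 h)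
    rw [sub_neg_eq_add, add_le_iff_nonpos_left] at this
    exact this.not_gt hμ
  by_contra ha
  obtain ⟨b, hb, hmax⟩ := (A.finite_hasEigenvalue.subset
    fun _ ↦ hasEigenvalue_of_not_isSemisimpleAt).exists_maximal ⟨a, ha⟩
  have hlt : b < b + μ + μ := (lt_add_of_pos_right b hμ).trans (lt_add_of_pos_right _ hμ)
  have hC' : IsSemisimpleAt (μ • 1 - A) (b + μ) ↔ IsSemisimpleAt A (-b) := by
    rw [isSemisimpleAt_smul_one_sub, sub_add_cancel_right]
  have hC'' : IsSemisimpleAt (μ • 1 - A) (-(b + μ)) ↔ IsSemisimpleAt A (b + μ + μ) := by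
    rw [isSemisimpleAt_smul_one_sub, sub_neg_eq_add, add_comm]
  exact hlt.not_ge (hmax (fun h ↦ hb (hAB.isSemisimpleAt_of_neg hA
    (hC'.1 (hCD.isSemisimpleAt_of_neg hC (hC''.2 h))))) hlt.le)

theorem iSup_eigenspace_eq_top [IsAlgClosed K] [FiniteDimensional K V]
    (hA : ∀ a, IsSemisimpleAt A a) : ⨆ a, A.eigenspace a = ⊤ := by
  rw [eq_top_iff, ← End.iSup_maxGenEigenspace_eq_top A]
  refine iSup_mono fun a v hv ↦ ?_
  obtain ⟨k, hk⟩ := (End.mem_maxGenEigenspace _ _ _).1 hv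
  have hker : LinearMap.ker ((A - a • 1) ^ 1) = LinearMap.ker ((A - a • 1) ^ Nat.succ 1) := by
    rw [pow_one]
    exact le_antisymm (LinearMap.ker_le_ker_comp _ _) (hA a)
  rw [End.eigenspace_def, ← pow_one (A - a • 1), End.ker_pow_constant hker k, LinearMap.mem_ker,
    pow_add, End.mul_apply, LinearMap.mem_ker.1 hk, map_zero]

end Spectrum

section Conjugation

theorem IsAnticommutingPair.map {R S F : Type*} [Ring R] [Ring S] [FunLike F R S]
    [RingHomClass F R S] {A B : R} (h : IsAnticommutingPair A B) (f : F) :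
    IsAnticommutingPair (f A) (f B) where
  semiconjBy := by simpa only [map_neg] using h.semiconjBy.map f
  mul_self_eq := by simpa only [map_mul, map_sub, map_one] using congr(f $h.mul_self_eq)

theorem IsAnticommutingPair.units_smul {R : Type*} [Ring R] {A B : R}
    (h : IsAnticommutingPair A B) (g : ConjAct Rˣ) : IsAnticommutingPair (g • A) (g • B) :=
  h.map (MulSemiringAction.toRingHom (ConjAct Rˣ) R g)

theorem exists_units_smul_eq_diagonal {K n : Type*} [Field K] [Fintype n] [DecidableEq n]
    {A : Matrix n n K} (hA : ⨆ a, End.eigenspace (toLinAlgEquiv' A) a = ⊤) :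
    ∃ (g : ConjAct (Matrix n n K)ˣ) (a : n → K),
      (∀ i, End.HasEigenvalue (toLinAlgEquiv' A) (a i)) ∧ g • A = diagonal a := by
  have hspan : ⊤ ≤ Submodule.span K
      (⋃ a, (End.eigenspace (toLinAlgEquiv' A) a : Set (n → K))) := by
    rw [← Submodule.iSup_eq_span, hA]
  let b₀ := Basis.ofSpan hspan
  let b : Basis n K (n → K) := b₀.reindex (b₀.indexEquiv (Pi.basisFun K n))
  have hb (i : n) : ∃ a, b i ∈ End.eigenspace (toLinAlgEquiv' A) a := by
    rw [Basis.reindex_apply]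
    exact Set.mem_iUnion.1 (Basis.ofSpan_subset hspan (Set.mem_range_self _))
  choose a ha using hb
  let := (Pi.basisFun K n).invertibleToMatrix b
  let P : (Matrix n n K)ˣ := unitOfInvertible ((Pi.basisFun K n).toMatrix b)
  have hAP : A * P = P * diagonal a := by
    ext i j
    have := congr($(End.mem_eigenspace_iff.1 (ha j)) i)
    rw [toLinAlgEquiv'_apply, Pi.smul_apply, smul_eq_mul] at this
    rw [mul_diagonal, mul_comm]
    exact this
  refine ⟨ConjAct.toConjAct P⁻¹, a,
    fun i ↦ End.hasEigenvalue_of_hasEigenvector ⟨ha i, b.ne_zero i⟩, ?_⟩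
  rw [ConjAct.units_smul_def, ConjAct.ofConjAct_toConjAct, inv_inv, mul_assoc, hAP,
    Units.inv_mul_cancel_left]

end Conjugation

theorem isNilpotent_of_mul_sub_mul_eq_smul {𝕜 R : Type*} [RCLike 𝕜] [NormedRing R]
    [NormedAlgebra 𝕜 R] {A T : R} {c : 𝕜} (hc : c ≠ 0) (h : A * T - T * A = c • T) :
    IsNilpotent T := by
  have hpow (k : ℕ) : A * T ^ k - T ^ k * A = (k * c) • T ^ k := by
    induction k with
    | zero => simp
    | succ k ih =>
      calc A * T ^ (k + 1) - T ^ (k + 1) * A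
          = (A * T ^ k - T ^ k * A) * T + T ^ k * (A * T - T * A) := by
            rw [pow_succ]
            noncomm_ring
        _ = ((k + 1 : ℕ) * c) • T ^ (k + 1) := by
            rw [ih, h, pow_succ, smul_mul_assoc, mul_smul_comm, ← add_smul]
            push_cast
            ring_nf
  obtain ⟨k, hk⟩ := exists_nat_gt (2 * ‖A‖ / ‖c‖)
  rw [div_lt_iff₀ (norm_pos_iff.2 hc)] at hk
  have hbound : k * ‖c‖ * ‖T ^ k‖ ≤ 2 * ‖A‖ * ‖T ^ k‖ :=
    calc k * ‖c‖ * ‖T ^ k‖ = ‖A * T ^ k - T ^ k * A‖ := by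
          rw [hpow, norm_smul, norm_mul, RCLike.norm_natCast]
      _ ≤ ‖A‖ * ‖T ^ k‖ + ‖T ^ k‖ * ‖A‖ :=
          (norm_sub_le _ _).trans (add_le_add (norm_mul_le _ _) (norm_mul_le _ _))
      _ = 2 * ‖A‖ * ‖T ^ k‖ := by ring
  refine ⟨k, norm_le_zero_iff.1 (not_lt.1 fun hpos ↦ ?_)⟩
  exact hk.not_ge (le_of_mul_le_mul_right hbound hpos)

theorem isNilpotent_mul_of_semiconjBy {𝕜 R : Type*} [RCLike 𝕜] [NormedRing R] [NormedAlgebra 𝕜 R]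
    {A J J' : R} {μ : 𝕜} (hμ : μ ≠ 0) (hJ : SemiconjBy J A (-A))
    (hJ' : SemiconjBy J' (μ • 1 - A) (-(μ • 1 - A))) : IsNilpotent (J' * J) := by
  have hAJ' : A * J' = (2 * μ) • J' - J' * A := by
    have := hJ'.eq
    rw [mul_sub, mul_smul_one, neg_mul, sub_mul, smul_one_mul, neg_sub] at this
    rw [sub_eq_iff_eq_add.1 this.symm]
    module
  refine isNilpotent_of_mul_sub_mul_eq_smul (A := A) (mul_ne_zero two_ne_zero hμ) ?_
  rw [← mul_assoc, hAJ', sub_mul, mul_assoc _ A, smul_mul_assoc, mul_assoc _ J, hJ.eq]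
  noncomm_ring

section StarRing

variable {R : Type*} [Ring R] [StarRing R]

/-- `J` plays the role of the involution in a polar decomposition of an element `B` anticommuting
with `A`: its square is a projection, and `B` is `J` times a self-adjoint element commuting with
`J`. The projection and the self-adjoint factor are asked to lie in the bicommutant of `A`; `J`
itself need not be self-adjoint. -/
structure IsPolarPart (A B J : R) : Prop where
  semiconjBy : SemiconjBy J A (-A)
  mul_mul_self : J * J * J = J
  isSelfAdjoint_mul_self : IsSelfAdjoint (J * J)
  commute_mul_self : ∀ X, Commute X A → Commute X (J * J)
  exists_eq_mul : ∃ s, IsSelfAdjoint s ∧ Commute s J ∧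
    (∀ X, Commute X A → Commute X s) ∧ B = J * s

theorem commute_star_mul_mul {A J X : R} (hA : IsSelfAdjoint A) (hJ : SemiconjBy J A (-A))
    (hX : Commute X A) : Commute (star J * X * J) A := by
  have hJ' : SemiconjBy (star J) (-A) A := by
    simpa only [SemiconjBy, star_mul, star_neg, hA.star_eq] using congr(star $hJ.eq).symm
  exact (hJ'.mul_left hX.neg_right).mul_left hJ

theorem exists_eq_add_star_mul_mul {T Y : R} (hT : IsNilpotent T) {p : R → Prop} (h0 : p 0)
    (hp : ∀ X, p X → p (Y + star T * X * T)) : ∃ F, p F ∧ F = Y + star T * F * T := by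
  obtain ⟨n, hn⟩ := hT
  let f (X : R) : R := Y + star T * X * T
  have hf (k : ℕ) : f (f^[k] 0) = f^[k] 0 + star (T ^ k) * Y * T ^ k := by
    induction k with
    | zero => simp [f]
    | succ k ih =>
      have hadd (X Z : R) : f (X + Z) = f X + star T * Z * T := by
        simp only [f, mul_add, add_mul, add_assoc]
      rw [Function.iterate_succ_apply']
      conv_lhs => rw [ih, hadd]
      simp only [pow_succ, star_mul, mul_assoc]
  refine ⟨f^[n] 0, ?_, ?_⟩
  · exact Function.Iterate.rec p h0 hp n
  · have := hf n
    rw [hn, mul_zero, add_zero] at this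
    exact this.symm

theorem IsPolarPart.star_mul_mul_eq {A B J F F' : R} (hJ : IsPolarPart A B J)
    (hF' : Commute F' A) (hF : F = star J * (1 + F') * J) :
    star J * (1 + F + F') * J = (1 + F + F') * (J * J) := by
  have hFe : F * (J * J) = F := by
    rw [hF, mul_assoc _ J, ← mul_assoc J, hJ.mul_mul_self]
  have hadj : star J * star J = J * J := by
    rw [← star_mul, hJ.isSelfAdjoint_mul_self.star_eq]
  have hFJ : star J * F * J = (1 + F') * (J * J) :=
    calc star J * F * J = (star J * star J) * (1 + F') * (J * J) := by
          rw [hF]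
          noncomm_ring
      _ = (1 + F') * (J * J * J * J) := by
          rw [hadj, ← (hJ.commute_mul_self _ ((Commute.one_left A).add_left hF')).eq]
          noncomm_ring
      _ = (1 + F') * (J * J) := by rw [hJ.mul_mul_self]
  calc star J * (1 + F + F') * J = star J * (1 + F') * J + star J * F * J := by noncomm_ring
    _ = F * (J * J) + (1 + F') * (J * J) := by rw [← hF, hFJ, hFe]
    _ = (1 + F + F') * (J * J) := by noncomm_ring

theorem IsPolarPart.star_mul_eq_mul {A B J H : R} (hJ : IsPolarPart A B J) (hH : Commute H A)
    (hconj : star J * H * J = H * (J * J)) : star B * H = H * B := by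
  have hstar : star J * (J * J) = star J := by
    simpa only [star_mul, hJ.isSelfAdjoint_mul_self.star_eq] using congr(star $hJ.mul_mul_self)
  have hHJ : star J * H = H * J :=
    calc star J * H = star J * (J * J) * H := by rw [hstar]
      _ = star J * H * J * J := by
          rw [mul_assoc, ← (hJ.commute_mul_self H hH).eq]
          noncomm_ring
      _ = H * J := by rw [hconj, mul_assoc, hJ.mul_mul_self]
  obtain ⟨s, hs, hsJ, hsA, rfl⟩ := hJ.exists_eq_mul
  calc star (J * s) * H = star (s * J) * H := by rw [hsJ.eq]
    _ = star J * H * s := by rw [star_mul, hs.star_eq, mul_assoc, ← (hsA H hH).eq, mul_assoc]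
    _ = H * (J * s) := by rw [hHJ, mul_assoc]

theorem exists_one_le_and_star_mul_eq_mul [PartialOrder R] [StarOrderedRing R]
    {A B C D J J' : R} (hA : IsSelfAdjoint A) (hC : IsSelfAdjoint C)
    (hAC : ∀ X, Commute X A ↔ Commute X C) (hJ : IsPolarPart A B J) (hJ' : IsPolarPart C D J')
    (hnil : IsNilpotent (J' * J)) :
    ∃ H, 1 ≤ H ∧ Commute H A ∧ star B * H = H * B ∧ star D * H = H * D := by
  -- Iterating `Φ J` and `Φ J'` alternately from `0` sums `w* w` over the alternating words `w`
  -- that end in `J`, respectively in `J'`.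
  let Φ (J X : R) : R := star J * (1 + X) * J
  have hΦA {X : R} (hX : 0 ≤ X ∧ Commute X A) : 0 ≤ Φ J X ∧ Commute (Φ J X) A :=
    ⟨star_left_conjugate_nonneg (add_nonneg zero_le_one hX.1) J,
      commute_star_mul_mul hA hJ.semiconjBy ((Commute.one_left A).add_left hX.2)⟩
  have hΦC {X : R} (hX : 0 ≤ X ∧ Commute X A) : 0 ≤ Φ J' X ∧ Commute (Φ J' X) A :=
    ⟨star_left_conjugate_nonneg (add_nonneg zero_le_one hX.1) J', (hAC _).2 <|
      commute_star_mul_mul hC hJ'.semiconjBy ((Commute.one_left C).add_left ((hAC _).1 hX.2))⟩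
  have hΦΦ (X : R) : Φ J (Φ J' 0) + star (J' * J) * X * (J' * J) = Φ J (Φ J' X) := by
    simp only [Φ, star_mul]
    noncomm_ring
  obtain ⟨F, hF, hFeq⟩ := exists_eq_add_star_mul_mul hnil (Y := Φ J (Φ J' 0))
    (p := fun X ↦ 0 ≤ X ∧ Commute X A) ⟨le_rfl, Commute.zero_left A⟩ fun X hX ↦ hΦΦ X ▸ hΦA (hΦC hX)
  rw [hΦΦ] at hFeq
  have hF' := hΦC hF
  have hH : Commute (1 + F + Φ J' F) A := ((Commute.one_left A).add_left hF.2).add_left hF'.2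
  refine ⟨1 + F + Φ J' F, ?_, hH, ?_, ?_⟩
  · rw [add_assoc]
    exact le_add_of_nonneg_right (add_nonneg hF.1 hF'.1)
  · exact hJ.star_mul_eq_mul hH (hJ.star_mul_mul_eq hF'.2 hFeq)
  · refine hJ'.star_mul_eq_mul ((hAC _).1 hH) ?_
    rw [add_right_comm]
    exact hJ'.star_mul_mul_eq ((hAC _).1 hF.2) rfl

theorem isSelfAdjoint_toConjAct_smul {g : Rˣ} {X : R}
    (hX : star X * (star (g : R) * g) = star (g : R) * g * X) :
    IsSelfAdjoint (ConjAct.toConjAct g • X) := by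
  rw [IsSelfAdjoint, ConjAct.units_smul_def, ConjAct.ofConjAct_toConjAct,
    Units.eq_mul_inv_iff_mul_eq, star_mul, star_mul, ← Units.coe_star_inv, mul_assoc, mul_assoc,
    Units.inv_mul_eq_iff_eq_mul, hX, mul_assoc, Units.coe_star]

theorem isSelfAdjoint_of_add_sub_one [Module ℝ R] [StarModule ℝ R] {P Q : R}
    (hadd : IsSelfAdjoint (P + Q - 1)) (hsub : IsSelfAdjoint (P - Q)) :
    IsSelfAdjoint P ∧ IsSelfAdjoint Q := by
  have hP : P = (2⁻¹ : ℝ) • (P + Q - 1 + (P - Q) + 1) := by module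
  have hQ : Q = (2⁻¹ : ℝ) • (P + Q - 1 - (P - Q) + 1) := by module
  exact ⟨hP ▸ .smul (.all _) ((hadd.add hsub).add (.one _)),
    hQ ▸ .smul (.all _) ((hadd.sub hsub).add (.one _))⟩

end StarRing

section Matrix

variable {n : Type*} [Fintype n]

theorem exists_sqrt_and_pseudoinverse {P : Matrix n n ℂ} (hP : 0 ≤ P) :
    ∃ s r : Matrix n n ℂ, IsSelfAdjoint s ∧ IsSelfAdjoint r ∧ s * s = P ∧ s * r * s = s ∧
      ∀ X, Commute P X → Commute s X ∧ Commute r X := by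
  classical
  have hcont (f : ℝ → ℝ) : ContinuousOn f (spectrum ℝ P) :=
    Matrix.finite_real_spectrum.continuousOn f
  refine ⟨cfc Real.sqrt P, cfc (fun x ↦ (√x)⁻¹) P, cfc_predicate _ _, cfc_predicate _ _, ?_, ?_,
    fun X hX ↦ ⟨hX.cfc_real _, hX.cfc_real _⟩⟩
  · rw [← cfc_mul _ _ _ (hcont _) (hcont _), cfc_congr (g := id), cfc_id ℝ P]
    exact fun x hx ↦ Real.mul_self_sqrt (spectrum_nonneg_of_nonneg hP hx)
  · simp only [← cfc_mul _ _ _ (hcont _) (hcont _)]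
    exact cfc_congr fun x _ ↦ mul_inv_mul_cancel √x

variable [DecidableEq n]

theorem IsAnticommutingPair.exists_isPolarPart {A B : Matrix n n ℂ} (h : IsAnticommutingPair A B)
    (hA : IsStrictlyPositive (1 + A)) (hA1 : A ≤ 1) : ∃ J, IsPolarPart A B J := by
  have hP : 0 ≤ B * B := by
    have hcomm : Commute (1 + A) (1 - A) :=
      (Commute.one_left _).add_left ((Commute.one_right A).sub_right (Commute.refl A))
    convert hcomm.mul_nonneg hA.nonneg (sub_nonneg.2 hA1) using 1
    rw [h.mul_self_eq]
    noncomm_ring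
  obtain ⟨s, r, hs, hr, hss, hsrs, hcomm⟩ := exists_sqrt_and_pseudoinverse hP
  have hPB : Commute (B * B) B := (Commute.refl B).mul_left (Commute.refl B)
  have hPA (X : Matrix n n ℂ) (hX : Commute X A) : Commute (B * B) X := by
    rw [h.mul_self_eq]
    exact ((Commute.one_right X).sub_right (hX.mul_right hX)).symm
  have hsB := (hcomm B hPB).1
  have hrB := (hcomm B hPB).2
  have hsr : Commute s r := (hcomm r (hcomm _ (Commute.refl _)).2.symm).1
  have hB : B * (s * r) = B := by
    have : B * B * (1 - s * r) = 0 := by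
      rw [← hss, mul_sub, mul_one, mul_assoc s s, hsr.eq, ← mul_assoc s r, hsrs, sub_self]
    have := h.mul_eq_zero_of_mul_mul_eq_zero hA.isUnit this
    rwa [mul_sub, mul_one, sub_eq_zero, eq_comm] at this
  have hJJ : B * r * (B * r) = s * r :=
    calc B * r * (B * r) = B * B * (r * r) := hrB.mul_mul_mul_comm B r
      _ = s * s * (r * r) := by rw [hss]
      _ = s * r * s * r := by rw [hsr.mul_mul_mul_comm, ← mul_assoc]
      _ = s * r := by rw [hsrs]
  refine ⟨B * r, h.semiconjBy.mul_left (hcomm A (hPA A (Commute.refl A))).2, ?_, ?_, ?_,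
    s, hs, hsB.mul_right hsr, fun X hX ↦ (hcomm X (hPA X hX)).1.symm, ?_⟩
  · rw [hJJ, ← mul_assoc, (hsB.mul_left hrB).eq, hB]
  · rw [hJJ]
    exact (hs.commute_iff hr).1 hsr
  · intro X hX
    rw [hJJ]
    exact ((hcomm X (hPA X hX)).1.mul_left (hcomm X (hPA X hX)).2).symm
  · rw [mul_assoc, ← hsr.eq, hB]

theorem exists_isSelfAdjoint_smul_of_le_one {A B D : Matrix n n ℂ} {μ : ℂ}
    (hAB : IsAnticommutingPair A B) (hCD : IsAnticommutingPair (μ • 1 - A) D) (hμ : 0 < μ)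
    (hA : A ≤ 1) (hC : μ • 1 - A ≤ 1) :
    ∃ g : ConjAct (Matrix n n ℂ)ˣ,
      IsSelfAdjoint (g • A) ∧ IsSelfAdjoint (g • B) ∧ IsSelfAdjoint (g • D) := by
  have hμ1 : IsStrictlyPositive (μ • 1 : Matrix n n ℂ) :=
    (PosDef.one.smul hμ).isStrictlyPositive
  have hA' : IsSelfAdjoint A := by
    simpa only [sub_sub_cancel] using
      (IsSelfAdjoint.one _).sub (IsSelfAdjoint.of_nonneg (sub_nonneg.2 hA))
  have hC' : IsSelfAdjoint (μ • 1 - A) := hμ1.isSelfAdjoint.sub hA'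
  have hpA : IsStrictlyPositive (1 + A) := by
    rw [show 1 + A = μ • 1 + (1 - (μ • 1 - A)) by abel]
    exact IsStrictlyPositive.add_nonneg hμ1 (sub_nonneg.2 hC)
  have hpC : IsStrictlyPositive (1 + (μ • 1 - A)) := by
    rw [show 1 + (μ • 1 - A) = μ • 1 + (1 - A) by abel]
    exact IsStrictlyPositive.add_nonneg hμ1 (sub_nonneg.2 hA)
  obtain ⟨J, hJ⟩ := hAB.exists_isPolarPart hpA hA
  obtain ⟨J', hJ'⟩ := hCD.exists_isPolarPart hpC hC
  have hnil := isNilpotent_mul_of_semiconjBy hμ.ne' hJ.semiconjBy hJ'.semiconjBy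
  have hAC (X : Matrix n n ℂ) : Commute X A ↔ Commute X (μ • 1 - A) := by
    have hsub {Y : Matrix n n ℂ} (h : Commute X Y) : Commute X (μ • 1 - Y) :=
      ((Commute.one_right X).smul_right μ).sub_right h
    exact ⟨hsub, fun h ↦ sub_sub_cancel (μ • 1) A ▸ hsub h⟩
  obtain ⟨H, hH, hHA, hHB, hHD⟩ := exists_one_le_and_star_mul_eq_mul hA' hC' hAC hJ hJ' hnil
  obtain ⟨R, hR, rfl⟩ := CStarAlgebra.isStrictlyPositive_iff_eq_star_mul_self.1
    (IsStrictlyPositive.of_le isStrictlyPositive_one hH)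
  lift R to (Matrix n n ℂ)ˣ using hR
  exact ⟨ConjAct.toConjAct R, isSelfAdjoint_toConjAct_smul (by rw [hA'.star_eq, hHA.eq]),
    isSelfAdjoint_toConjAct_smul hHB, isSelfAdjoint_toConjAct_smul hHD⟩

theorem exists_isSelfAdjoint_smul_of_pairs {A B D : Matrix n n ℂ} {μ : ℂ}
    (hAB : IsAnticommutingPair A B) (hCD : IsAnticommutingPair (μ • 1 - A) D) (hμ : 0 < μ) :
    ∃ g : ConjAct (Matrix n n ℂ)ˣ,
      IsSelfAdjoint (g • A) ∧ IsSelfAdjoint (g • B) ∧ IsSelfAdjoint (g • D) := by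
  have hAB' := hAB.map (toLinAlgEquiv' (R := ℂ) (n := n))
  have hCD' := hCD.map (toLinAlgEquiv' (R := ℂ) (n := n))
  rw [map_sub, map_smul, map_one] at hCD'
  obtain ⟨g, a, ha, hgA⟩ := exists_units_smul_eq_diagonal
    (iSup_eigenspace_eq_top (isSemisimpleAt_of_pairs hAB' hCD' hμ))
  have hdiag {b : n → ℂ} (hb : ∀ i, b i ≤ 1) : diagonal b ≤ 1 := by
    rw [Matrix.le_iff, ← diagonal_one, diagonal_sub]
    exact PosSemidef.diagonal fun i ↦ sub_nonneg.2 (hb i)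
  have hgC : g • (μ • 1 - A) = μ • 1 - g • A := by
    rw [smul_sub, smul_comm, smul_one]
  have hCDg : IsAnticommutingPair (μ • 1 - g • A) (g • D) := hgC ▸ hCD.units_smul g
  have hA : g • A ≤ 1 := by
    rw [hgA]
    exact hdiag fun i ↦ eigenvalue_le_one hAB' hCD' hμ (ha i)
  have hC : μ • 1 - g • A ≤ 1 := by
    rw [hgA, smul_one_eq_diagonal, diagonal_sub]
    exact hdiag fun i ↦ sub_eigenvalue_le_one hAB' hCD' hμ (ha i)
  obtain ⟨h, hhA, hhB, hhD⟩ :=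
    exists_isSelfAdjoint_smul_of_le_one (hAB.units_smul g) hCDg hμ hA hC
  refine ⟨h * g, ?_⟩
  simp only [mul_smul]
  exact ⟨hhA, hhB, hhD⟩

theorem exists_isSelfAdjoint_smul_of_two_lt {Q : Fin 4 → Matrix n n ℂ} {lam : ℂ} (hlam : 2 < lam)
    (hQ : ∀ k, IsIdempotentElem (Q k)) (hsum : ∑ k, Q k = lam • 1) :
    ∃ g : ConjAct (Matrix n n ℂ)ˣ, ∀ k, IsSelfAdjoint (g • Q k) := by
  have hQC : Q 2 + Q 3 - 1 = (lam - 2) • 1 - (Q 0 + Q 1 - 1) := by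
    rw [sub_smul, ← hsum, Fin.sum_univ_four, two_smul]
    abel
  have hCD := isAnticommutingPair_of_isIdempotentElem (hQ 2) (hQ 3)
  obtain ⟨g, hA, hB, hD⟩ := exists_isSelfAdjoint_smul_of_pairs
    (isAnticommutingPair_of_isIdempotentElem (hQ 0) (hQ 1)) (hQC ▸ hCD) (sub_pos.2 hlam)
  have hC : IsSelfAdjoint (g • (Q 2 + Q 3 - 1)) := by
    rw [hQC, smul_sub, smul_comm, smul_one]
    exact (IsSelfAdjoint.smul (IsSelfAdjoint.of_nonneg (sub_nonneg.2 hlam.le)) (.one _)).sub hA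
  have hA' := isSelfAdjoint_of_add_sub_one (by rwa [smul_sub, smul_add, smul_one] at hA)
    (by rwa [smul_sub] at hB)
  have hC' := isSelfAdjoint_of_add_sub_one (by rwa [smul_sub, smul_add, smul_one] at hC)
    (by rwa [smul_sub] at hD)
  refine ⟨g, fun k ↦ ?_⟩
  fin_cases k
  exacts [hA'.1, hA'.2, hC'.1, hC'.2]

end Matrix

theorem exists_trace_eq_natCast {K n : Type*} [Field K] [Fintype n] {Q : Matrix n n K}
    (hQ : IsIdempotentElem Q) : ∃ r : ℕ, Q.trace = r := by
  classical
  have h : IsIdempotentElem (toLinAlgEquiv' Q) := hQ.map _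
  exact ⟨_, (trace_toLin'_eq Q).symm.trans (LinearMap.IsIdempotentElem.isProj_range _ h).trace⟩

theorem exists_eq_ratCast_of_sum_eq_smul_one {K n ι : Type*} [Field K] [CharZero K] [Fintype n]
    [DecidableEq n] [Nonempty n] [Fintype ι] {Q : ι → Matrix n n K} {c : K}
    (hQ : ∀ k, IsIdempotentElem (Q k)) (hsum : ∑ k, Q k = c • 1) : ∃ q : ℚ, c = q := by
  choose r hr using fun k ↦ exists_trace_eq_natCast (hQ k)
  have h := congr(trace $hsum)
  rw [trace_sum, trace_smul, trace_one, smul_eq_mul] at h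
  simp only [hr] at h
  refine ⟨(∑ k, (r k : ℚ)) / Fintype.card n, ?_⟩
  push_cast
  exact eq_div_of_mul_eq (Nat.cast_ne_zero.2 Fintype.card_ne_zero) h.symm

theorem exists_isSelfAdjoint_smul_of_ne_two {n : Type*} [Fintype n] [DecidableEq n] [Nonempty n]
    {Q : Fin 4 → Matrix n n ℂ} {lam : ℂ} (hlam : lam ≠ 2)
    (hQ : ∀ k, IsIdempotentElem (Q k)) (hsum : ∑ k, Q k = lam • 1) :
    ∃ g : ConjAct (Matrix n n ℂ)ˣ, ∀ k, IsSelfAdjoint (g • Q k) := by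
  obtain ⟨q, hq⟩ := exists_eq_ratCast_of_sum_eq_smul_one hQ hsum
  obtain ⟨r, rfl⟩ : ∃ r : ℝ, lam = r := ⟨q, by rw [hq, Complex.ofReal_ratCast]⟩
  have hr : r ≠ 2 := mod_cast hlam
  rcases hr.lt_or_gt with hlt | hgt
  · have hsum' : ∑ k, (1 - Q k) = ((4 - r : ℝ) : ℂ) • 1 := by
      rw [Finset.sum_sub_distrib, hsum, Finset.sum_const, Finset.card_univ, Fintype.card_fin]
      push_cast
      module
    have hlt' : (2 : ℝ) < 4 - r := by linarith
    obtain ⟨g, hg⟩ := exists_isSelfAdjoint_smul_of_two_lt (mod_cast hlt')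
      (fun k ↦ (hQ k).one_sub) hsum'
    refine ⟨g, fun k ↦ ?_⟩
    have := (IsSelfAdjoint.one _).sub (hg k)
    rwa [smul_sub, smul_one, sub_sub_cancel] at this
  · exact exists_isSelfAdjoint_smul_of_two_lt (mod_cast hgt) hQ hsum

end FourIdempotents

open FourIdempotents in
theorem four_idempotent_matrices_similar_hermitian_general {n : Type*} [Fintype n] [DecidableEq n]
    {lam : ℂ} (hlam : lam ≠ 2) {Q : Fin 4 → Matrix n n ℂ} (hidem : ∀ k, IsIdempotentElem (Q k))
    (hsum : ∑ k, Q k = lam • 1) :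
    ∃ S : Matrix n n ℂ, IsUnit S ∧ ∀ k, (S⁻¹ * Q k * S).IsHermitian := by
  rcases isEmpty_or_nonempty n with _ | _
  · exact ⟨1, isUnit_one, fun k ↦ Subsingleton.elim _ _⟩
  obtain ⟨g, hg⟩ := exists_isSelfAdjoint_smul_of_ne_two hlam hidem hsum
  refine ⟨↑(ConjAct.ofConjAct g)⁻¹, Units.isUnit _, fun k ↦ ?_⟩
  rw [← Matrix.coe_units_inv, inv_inv]
  exact hg k

/-- Four idempotent `d×d` complex matrices summing to `λ·I` with `λ ≠ 2` are
simultaneously similar to Hermitian matrices (orthogonal projections). -/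
theorem four_idempotent_matrices_similar_hermitian
    {d : ℕ} (hd : 1 ≤ d) (lam : ℂ) (hlam : lam ≠ 2)
    (Q : Fin 4 → Matrix (Fin d) (Fin d) ℂ)
    (hidem : ∀ k, Q k ^ 2 = Q k)
    (hsum : ∑ k, Q k = lam • (1 : Matrix (Fin d) (Fin d) ℂ)) :
    ∃ S : Matrix (Fin d) (Fin d) ℂ, IsUnit S ∧
      ∀ k, (S⁻¹ * Q k * S).IsHermitian :=
  four_idempotent_matrices_similar_hermitian_general hlam
    (fun k ↦ (pow_two (Q k)).symm.trans (hidem k)) hsum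
end

section
/- Let λ ∈ ℂ and let X be the complex vector space of all functions f : ℂ → ℂ. Define linear operators q₁, q₂, q₃, q₄ on X by (q₁f)(z) = z(f(z) + f(1−z)), (q₂f)(z) = z(f(z) − f(1−z)), (q₃f)(z) = (λ/2 − z)f(z) + (1 − λ/2 + z)f(λ−1−z), (q₄f)(z) = (λ/2 − z)f(z) − (1 − λ/2 + z)f(λ−1−z). Then qᵢ² = qᵢ for i = 1,2,3,4 and q₁ + q₂ + q₃ + q₄ = λ·id_X. In particular, for every λ ∈ ℂ there exist four idempotent linear operators on a nonzero complex vector space whose sum is λ times the identity. -/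
/-!
Each of the four operators has the form `f ↦ a • f + b • (f ∘ σ)` with `σ` an involution, so on an
orbit `{x, σ x}` it acts through the matrix `!![a x, b x; b (σ x), a (σ x)]`. This matrix has
trace `1` and determinant `0`, hence is idempotent by Cayley–Hamilton. The pairs `q₁, q₂` and
`q₃, q₄` differ in the sign of `b`, so `q₁ + q₂` and `q₃ + q₄` are the multiplications
by `2 * z` and `lam - 2 * z`.
-/

open Function

universe u v

/-- The weighted reflection operator `f ↦ a • f + b • (f ∘ σ)` on functions with values in a module,
meant for an involution `σ`; no condition on `σ` is built into the definition. -/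
def weightedReflection {α R M : Type*} [CommSemiring R] [AddCommMonoid M] [Module R M]
    (σ : α → α) (a b : α → R) : Module.End R (α → M) where
  toFun f x := a x • f x + b x • f (σ x)
  map_add' f g := by
    ext x
    simp only [Pi.add_apply, smul_add, add_add_add_comm]
  map_smul' c f := by
    ext x
    simp only [Pi.smul_apply, smul_add, smul_comm c, RingHom.id_apply]

section Semiring

variable {α R M : Type*} [CommSemiring R] [AddCommMonoid M] [Module R M]
  {σ : α → α} {a b : α → R}

theorem weightedReflection_apply (σ : α → α) (a b : α → R) (f : α → M) (x : α) :
    weightedReflection σ a b f x = a x • f x + b x • f (σ x) := rfl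

theorem isIdempotentElem_weightedReflection (hσ : Involutive σ)
    (trace_eq_one : ∀ x, a x + a (σ x) = 1)
    (det_eq_zero : ∀ x, a x * a (σ x) = b x * b (σ x)) :
    IsIdempotentElem (weightedReflection σ a b : Module.End R (α → M)) := by
  ext f x
  have diag : a x * a x + b x * b (σ x) = a x := by
    rw [← det_eq_zero, ← mul_add, trace_eq_one, mul_one]
  have off_diag : a x * b x + b x * a (σ x) = b x := by
    rw [mul_comm (a x), ← mul_add, trace_eq_one, mul_one]
  calc a x • (a x • f x + b x • f (σ x)) + b x • (a (σ x) • f (σ x) + b (σ x) • f (σ (σ x)))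
      = (a x * a x + b x * b (σ x)) • f x + (a x * b x + b x * a (σ x)) • f (σ x) := by
        rw [hσ x]
        module
    _ = a x • f x + b x • f (σ x) := by rw [diag, off_diag]

end Semiring

section Ring

variable {α R M : Type*} [CommRing R] [AddCommGroup M] [Module R M] {σ : α → α} {a b : α → R}

theorem weightedReflection_neg_apply (σ : α → α) (a b : α → R) (f : α → M) (x : α) :
    weightedReflection σ a (-b) f x = a x • f x - b x • f (σ x) := by
  rw [weightedReflection_apply, Pi.neg_apply, neg_smul, sub_eq_add_neg]

theorem isIdempotentElem_weightedReflection_neg (hσ : Involutive σ)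
    (trace_eq_one : ∀ x, a x + a (σ x) = 1)
    (det_eq_zero : ∀ x, a x * a (σ x) = b x * b (σ x)) :
    IsIdempotentElem (weightedReflection σ a (-b) : Module.End R (α → M)) :=
  isIdempotentElem_weightedReflection hσ trace_eq_one fun x =>
    (det_eq_zero x).trans (neg_mul_neg _ _).symm

theorem weightedReflection_add_neg_apply (σ : α → α) (a b : α → R) (f : α → M) (x : α) :
    weightedReflection σ a b f x + weightedReflection σ a (-b) f x = (2 * a x) • f x := by
  rw [weightedReflection_apply, weightedReflection_neg_apply, add_add_sub_cancel,
    ← add_smul, ← two_mul]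

end Ring

theorem four_idempotent_operators_on_functions_general {R : Type u} {M : Type v}
    [CommRing R] [AddCommGroup M] [Module R M] [Nontrivial M] {lam μ : R} (hμ : 2 * μ = lam)
    (q₁ q₂ q₃ q₄ : (R → M) →ₗ[R] (R → M))
    (h₁ : ∀ f z, q₁ f z = z • (f z + f (1 - z)))
    (h₂ : ∀ f z, q₂ f z = z • (f z - f (1 - z)))
    (h₃ : ∀ f z, q₃ f z = (μ - z) • f z + (1 - μ + z) • f (lam - 1 - z))
    (h₄ : ∀ f z, q₄ f z = (μ - z) • f z - (1 - μ + z) • f (lam - 1 - z)) :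
    (q₁ ∘ₗ q₁ = q₁ ∧ q₂ ∘ₗ q₂ = q₂ ∧ q₃ ∘ₗ q₃ = q₃ ∧ q₄ ∘ₗ q₄ = q₄) ∧
    q₁ + q₂ + q₃ + q₄ = lam • (LinearMap.id : (R → M) →ₗ[R] (R → M)) ∧
    ∃ (X : Type (max u v)) (_ : AddCommGroup X) (_ : Module R X) (_ : Nontrivial X)
      (p : Fin 4 → X →ₗ[R] X),
      (∀ i, p i ∘ₗ p i = p i) ∧
      p 0 + p 1 + p 2 + p 3 = lam • (LinearMap.id : X →ₗ[R] X) := by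
  let σ : R → R := (1 - ·)
  let τ : R → R := (lam - 1 - ·)
  let c : R → R := (μ - ·)
  have hσ : Involutive σ := sub_sub_cancel 1
  have hτ : Involutive τ := sub_sub_cancel (lam - 1)
  have trace_σ (z : R) : id z + id (σ z) = 1 := add_sub_cancel z 1
  have c_τ (z : R) : c (τ z) = 1 - μ + z := by simp only [c, τ, ← hμ]; ring
  have trace_τ (z : R) : c z + c (τ z) = 1 := by rw [c_τ]; ring
  have det_τ (z : R) : c z * c (τ z) = c (τ z) * c (τ (τ z)) := by rw [hτ z, mul_comm]
  obtain rfl : q₁ = weightedReflection σ id id :=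
    LinearMap.ext fun f => funext fun z => (h₁ f z).trans (smul_add ..)
  obtain rfl : q₂ = weightedReflection σ id (-id) :=
    LinearMap.ext fun f => funext fun z => by rw [h₂, weightedReflection_neg_apply, smul_sub, id]
  obtain rfl : q₃ = weightedReflection τ c (c ∘ τ) :=
    LinearMap.ext fun f => funext fun z => by rw [h₃, weightedReflection_apply, comp_apply, c_τ]
  obtain rfl : q₄ = weightedReflection τ c (-(c ∘ τ)) :=
    LinearMap.ext fun f => funext fun z => by rw [h₄, weightedReflection_neg_apply, comp_apply, c_τ]
  have idem₁ := isIdempotentElem_weightedReflection (M := M) hσ trace_σ fun _ => rfl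
  have idem₂ := isIdempotentElem_weightedReflection_neg (M := M) hσ trace_σ fun _ => rfl
  have idem₃ := isIdempotentElem_weightedReflection (M := M) (b := c ∘ τ) hτ trace_τ det_τ
  have idem₄ := isIdempotentElem_weightedReflection_neg (M := M) (b := c ∘ τ) hτ trace_τ det_τ
  have sum_eq : weightedReflection σ id id + weightedReflection σ id (-id) +
      weightedReflection τ c (c ∘ τ) + weightedReflection τ c (-(c ∘ τ)) =
      lam • (LinearMap.id : (R → M) →ₗ[R] (R → M)) := by
    ext f z
    simp only [add_assoc _ (weightedReflection τ _ _), LinearMap.add_apply, Pi.add_apply,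
      weightedReflection_add_neg_apply, ← add_smul, ← mul_add, id, c, add_sub_cancel, hμ,
      LinearMap.smul_apply, LinearMap.id_apply, Pi.smul_apply]
  refine ⟨⟨idem₁, idem₂, idem₃, idem₄⟩, sum_eq, R → M, inferInstance, inferInstance,
    inferInstance, ![_, _, _, _], ?_, sum_eq⟩
  simpa only [Fin.forall_fin_succ] using ⟨idem₁, idem₂, idem₃, idem₄, finZeroElim⟩

/-- The explicit linear operators `q₁, q₂, q₃, q₄` on the space of all functions
`ℂ → ℂ` are idempotents summing to `λ·id`. In particular, for every `λ ∈ ℂ` there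
exist four idempotent linear operators on a nonzero complex vector space whose sum
is `λ` times the identity. -/
theorem four_idempotent_operators_on_functions (lam : ℂ)
    (q₁ q₂ q₃ q₄ : (ℂ → ℂ) →ₗ[ℂ] (ℂ → ℂ))
    (h₁ : ∀ f z, q₁ f z = z * (f z + f (1 - z)))
    (h₂ : ∀ f z, q₂ f z = z * (f z - f (1 - z)))
    (h₃ : ∀ f z, q₃ f z = (lam / 2 - z) * f z + (1 - lam / 2 + z) * f (lam - 1 - z))
    (h₄ : ∀ f z, q₄ f z = (lam / 2 - z) * f z - (1 - lam / 2 + z) * f (lam - 1 - z)) :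
    (q₁ ∘ₗ q₁ = q₁ ∧ q₂ ∘ₗ q₂ = q₂ ∧ q₃ ∘ₗ q₃ = q₃ ∧ q₄ ∘ₗ q₄ = q₄) ∧
    q₁ + q₂ + q₃ + q₄ = lam • (LinearMap.id : (ℂ → ℂ) →ₗ[ℂ] (ℂ → ℂ)) ∧
    ∃ (X : Type) (_ : AddCommGroup X) (_ : Module ℂ X) (_ : Nontrivial X)
      (p : Fin 4 → X →ₗ[ℂ] X),
      (∀ i, p i ∘ₗ p i = p i) ∧
      p 0 + p 1 + p 2 + p 3 = lam • (LinearMap.id : X →ₗ[ℂ] X) :=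
  four_idempotent_operators_on_functions_general (mul_div_cancel₀ lam two_ne_zero)
    q₁ q₂ q₃ q₄ h₁ h₂ h₃ h₄
end

section
/- Let H be a complex Hilbert space and let S₁, S₂ be bounded linear operators on H satisfying S₁*S₁ = S₂*S₂ = I, S₁*S₂ = 0, and S₁S₁* + S₂S₂* = I. Let λ ∈ ℂ and set a = (5−2λ)/6, b = (4λ−7)/3, c = (3λ−5)/4, d = (7−3λ)/2. Define the following operators on H ⊕ H ⊕ H, written as 3×3 operator matrices (scalars denote scalar multiples of the identity on H): Q₁ = [[a,3a,b],[a,3a,b],[a,3a,b]], Q₂ = [[a,−3a,b],[−a,3a,−b],[a,−3a,b]], Q₃ = [[4a,0,−2b],[0,0,0],[−2a,0,b]], Q₄ = [[2c,0,2dcS₁*],[0,2c,2dcS₂*],[S₁,S₂,d]], Q₅ = [[2c,0,−2dcS₁*],[0,2c,−2dcS₂*],[−S₁,−S₂,d]]. Then Qᵢ² = Qᵢ for i = 1,…,5 and Q₁ + Q₂ + Q₃ + Q₄ + Q₅ = λ·I on H ⊕ H ⊕ H. -/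
open ContinuousLinearMap

/-!
Each `Qᵢ` factors as `u φ` with a column `u : H → H ⊕ H ⊕ H` and a row `φ : H ⊕ H ⊕ H → H` such
that `φ u = 1`, so `(u φ)² = u (φ u) φ = u φ`. For `Q₁, Q₂, Q₃` the entries are scalars and
`φ u = 4a + b`:
`Q₁ = (1, 1, 1)ᵀ (a, 3a, b)`, `Q₂ = (1, -1, 1)ᵀ (a, -3a, b)`, `Q₃ = (2, 0, -1)ᵀ (2a, 0, -b)`.
The Cuntz relations say that the row `(S₁, S₂) : H ⊕ H → H` has inverse `(S₁*, S₂*)ᵀ`, whence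
`Q₄ = (2c S₁*, 2c S₂*, 1)ᵀ (S₁, S₂, d)` with `φ u = 2c + d`, and `Q₅` is `Q₄` for `-S₁, -S₂`.
In both `Q₁ + Q₂ + Q₃` and `Q₄ + Q₅` the off-diagonal entries cancel, leaving
`diag (6a, 6a, 3b)` and `diag (4c, 4c, 2d)`. The constants solve
`4a + b = 1`, `2c + d = 1`, `6a + 4c = λ = 3b + 2d`.
-/

/-- The relations of the Leavitt algebra `L(1, 2)`, which are the Cuntz relations of `O₂` with the
adjoints of `s₁, s₂` replaced by arbitrary elements `t₁, t₂`. The relations `t₁ s₂ = 0` and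
`t₂ s₁ = 0` are the theorems `mul_eq_zero₁₂` and `mul_eq_zero₂₁` rather than fields. -/
structure LeavittRelations {A : Type*} [Ring A] (s₁ s₂ t₁ t₂ : A) : Prop where
  mul_eq_one₁ : t₁ * s₁ = 1
  mul_eq_one₂ : t₂ * s₂ = 1
  add_eq_one : s₁ * t₁ + s₂ * t₂ = 1

namespace LeavittRelations

variable {A : Type*} [Ring A] {s₁ s₂ t₁ t₂ : A}

theorem swap (h : LeavittRelations s₁ s₂ t₁ t₂) : LeavittRelations s₂ s₁ t₂ t₁ :=
  ⟨h.mul_eq_one₂, h.mul_eq_one₁, by rw [add_comm, h.add_eq_one]⟩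

theorem mul_eq_zero₁₂ (h : LeavittRelations s₁ s₂ t₁ t₂) : t₁ * s₂ = 0 := by
  have doubling : t₁ * s₂ = t₁ * s₂ + t₁ * s₂ :=
    calc t₁ * s₂ = t₁ * (s₁ * t₁ + s₂ * t₂) * s₂ := by rw [h.add_eq_one, mul_one]
      _ = (t₁ * s₁) * (t₁ * s₂) + (t₁ * s₂) * (t₂ * s₂) := by
        simp only [mul_add, add_mul, mul_assoc]
      _ = t₁ * s₂ + t₁ * s₂ := by rw [h.mul_eq_one₁, h.mul_eq_one₂, one_mul, mul_one]
  exact left_eq_add.mp doubling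

theorem mul_eq_zero₂₁ (h : LeavittRelations s₁ s₂ t₁ t₂) : t₂ * s₁ = 0 :=
  h.swap.mul_eq_zero₁₂

theorem neg (h : LeavittRelations s₁ s₂ t₁ t₂) :
    LeavittRelations (-s₁) (-s₂) (-t₁) (-t₂) := by
  constructor <;> simp only [neg_mul_neg, h.mul_eq_one₁, h.mul_eq_one₂, h.add_eq_one]

end LeavittRelations

theorem isIdempotentElem_comp_of_comp_eq_id {R E F : Type*} [Semiring R]
    [TopologicalSpace E] [AddCommMonoid E] [Module R E]
    [TopologicalSpace F] [AddCommMonoid F] [Module R F]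
    {u : F →L[R] E} {φ : E →L[R] F} (h : φ ∘L u = .id R F) : IsIdempotentElem (u ∘L φ) :=
  calc (u ∘L φ) ∘L (u ∘L φ) = u ∘L (φ ∘L u) ∘L φ := rfl
    _ = u ∘L φ := by rw [h, id_comp]

theorem isIdempotentElem_of_column_comp_row {R E₁ E₂ E₃ F : Type*} [Semiring R]
    [TopologicalSpace E₁] [AddCommMonoid E₁] [Module R E₁]
    [TopologicalSpace E₂] [AddCommMonoid E₂] [Module R E₂]
    [TopologicalSpace E₃] [AddCommMonoid E₃] [Module R E₃]
    [TopologicalSpace F] [AddCommMonoid F] [ContinuousAdd F] [Module R F]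
    {u₁ : F →L[R] E₁} {u₂ : F →L[R] E₂} {u₃ : F →L[R] E₃}
    {φ₁ : E₁ →L[R] F} {φ₂ : E₂ →L[R] F} {φ₃ : E₃ →L[R] F}
    (h : φ₁ ∘L u₁ + φ₂ ∘L u₂ + φ₃ ∘L u₃ = .id R F)
    {Q : (E₁ × E₂ × E₃) →L[R] (E₁ × E₂ × E₃)}
    (hQ : ∀ x y z, Q (x, y, z) =
      (u₁ (φ₁ x + φ₂ y + φ₃ z), u₂ (φ₁ x + φ₂ y + φ₃ z), u₃ (φ₁ x + φ₂ y + φ₃ z))) :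
    IsIdempotentElem Q := by
  have factorization : Q = u₁.prod (u₂.prod u₃) ∘L φ₁.coprod (φ₂.coprod φ₃) :=
    ContinuousLinearMap.ext fun ⟨x, y, z⟩ => by
      simp only [hQ, comp_apply, prod_apply, coprod_apply, add_assoc]
  have row_comp_column : φ₁.coprod (φ₂.coprod φ₃) ∘L u₁.prod (u₂.prod u₃) = .id R F := by
    rw [← h, add_assoc]
    rfl
  rw [factorization]
  exact isIdempotentElem_comp_of_comp_eq_id row_comp_column

theorem isIdempotentElem_of_scalar_column_comp_row {R M : Type*} [CommSemiring R]
    [TopologicalSpace M] [AddCommMonoid M] [ContinuousAdd M] [Module R M]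
    [ContinuousConstSMul R M] {α β γ p q r : R} (h : α * p + β * q + γ * r = 1)
    {Q : (M × M × M) →L[R] (M × M × M)}
    (hQ : ∀ x y z, Q (x, y, z) =
      (α • (p • x + q • y + r • z), β • (p • x + q • y + r • z), γ • (p • x + q • y + r • z))) :
    IsIdempotentElem Q := by
  refine isIdempotentElem_of_column_comp_row (u₁ := α • .id R M) (u₂ := β • .id R M)
    (u₃ := γ • .id R M) (φ₁ := p • .id R M) (φ₂ := q • .id R M) (φ₃ := r • .id R M) ?_ hQ
  simp only [comp_smul, comp_id, smul_smul, ← add_smul, h, one_smul]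

section OperatorMatrices

variable {R M : Type*} [CommRing R] [TopologicalSpace M] [AddCommGroup M]
  [IsTopologicalAddGroup M] [Module R M] [ContinuousConstSMul R M]

theorem LeavittRelations.isIdempotentElem_operatorMatrix {S₁ S₂ T₁ T₂ : M →L[R] M}
    (hST : LeavittRelations S₁ S₂ T₁ T₂) {e d : R} (hed : e + d = 1)
    {Q : (M × M × M) →L[R] (M × M × M)}
    (hQ : ∀ x y z, Q (x, y, z) =
      (e • x + (d * e) • T₁ z, e • y + (d * e) • T₂ z, S₁ x + S₂ y + d • z)) :
    IsIdempotentElem Q := by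
  have h₁₁ (x : M) : T₁ (S₁ x) = x := DFunLike.congr_fun hST.mul_eq_one₁ x
  have h₂₂ (x : M) : T₂ (S₂ x) = x := DFunLike.congr_fun hST.mul_eq_one₂ x
  have h₁₂ (x : M) : T₁ (S₂ x) = 0 := DFunLike.congr_fun hST.mul_eq_zero₁₂ x
  have h₂₁ (x : M) : T₂ (S₁ x) = 0 := DFunLike.congr_fun hST.mul_eq_zero₂₁ x
  refine isIdempotentElem_of_column_comp_row (u₁ := e • T₁) (u₂ := e • T₂) (u₃ := .id R M)
    (φ₁ := S₁) (φ₂ := S₂) (φ₃ := d • .id R M) ?row_comp_column fun x y z => ?column_comp_row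
  case row_comp_column =>
    calc S₁ ∘L (e • T₁) + S₂ ∘L (e • T₂) + (d • .id R M) ∘L .id R M
        = e • (S₁ * T₁ + S₂ * T₂) + d • .id R M := by
          simp only [comp_smul, comp_id, smul_add, mul_def]
      _ = .id R M := by rw [hST.add_eq_one, one_def, ← add_smul, hed, one_smul]
  case column_comp_row =>
    simp only [hQ, smul_apply, id_apply, map_add, map_smul, h₁₁, h₂₂, h₁₂, h₂₁, Prod.mk.injEq,
      and_true]
    constructor <;> module

theorem five_idempotents_from_cuntz_general {S₁ S₂ T₁ T₂ : M →L[R] M}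
    (hST : LeavittRelations S₁ S₂ T₁ T₂) {lam a b c d : R}
    (hab : 4 * a + b = 1) (hcd : 2 * c + d = 1)
    (hac : 6 * a + 4 * c = lam) (hbd : 3 * b + 2 * d = lam)
    {Q : Fin 5 → (M × M × M) →L[R] (M × M × M)}
    (hQ₁ : ∀ x y z : M, Q 0 (x, y, z) =
      (a • x + (3 * a) • y + b • z, a • x + (3 * a) • y + b • z,
        a • x + (3 * a) • y + b • z))
    (hQ₂ : ∀ x y z : M, Q 1 (x, y, z) =
      (a • x - (3 * a) • y + b • z, -(a • x) + (3 * a) • y - b • z,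
        a • x - (3 * a) • y + b • z))
    (hQ₃ : ∀ x y z : M, Q 2 (x, y, z) =
      ((4 * a) • x - (2 * b) • z, 0, -((2 * a) • x) + b • z))
    (hQ₄ : ∀ x y z : M, Q 3 (x, y, z) =
      ((2 * c) • x + (2 * d * c) • T₁ z, (2 * c) • y + (2 * d * c) • T₂ z, S₁ x + S₂ y + d • z))
    (hQ₅ : ∀ x y z : M, Q 4 (x, y, z) =
      ((2 * c) • x - (2 * d * c) • T₁ z, (2 * c) • y - (2 * d * c) • T₂ z,
        -(S₁ x) - S₂ y + d • z)) :
    (∀ i, IsIdempotentElem (Q i)) ∧ ∑ i, Q i = lam • (1 : (M × M × M) →L[R] (M × M × M)) := by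
  constructor
  · have idem₁ : IsIdempotentElem (Q 0) :=
      isIdempotentElem_of_scalar_column_comp_row (α := 1) (β := 1) (γ := 1)
        (p := a) (q := 3 * a) (r := b) (by linear_combination hab)
        fun x y z => by simp only [hQ₁, one_smul]
    have idem₂ : IsIdempotentElem (Q 1) :=
      isIdempotentElem_of_scalar_column_comp_row (α := 1) (β := -1) (γ := 1)
        (p := a) (q := -(3 * a)) (r := b) (by linear_combination hab)
        fun x y z => by rw [hQ₂]; congr 2 <;> module
    have idem₃ : IsIdempotentElem (Q 2) :=
      isIdempotentElem_of_scalar_column_comp_row (α := 2) (β := 0) (γ := -1)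
        (p := 2 * a) (q := 0) (r := -b) (by linear_combination hab)
        fun x y z => by rw [hQ₃]; congr 2 <;> module
    have idem₄ : IsIdempotentElem (Q 3) :=
      hST.isIdempotentElem_operatorMatrix hcd fun x y z => by rw [hQ₄]; congr 2 <;> module
    have idem₅ : IsIdempotentElem (Q 4) :=
      hST.neg.isIdempotentElem_operatorMatrix hcd fun x y z => by
        rw [hQ₅]; simp only [neg_apply]; congr 2 <;> module
    intro i
    fin_cases i <;> assumption
  · have sum₁₂₃ (x y z : M) : Q 0 (x, y, z) + Q 1 (x, y, z) + Q 2 (x, y, z) =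
        ((6 * a) • x, (6 * a) • y, (3 * b) • z) := by
      simp only [hQ₁, hQ₂, hQ₃, Prod.mk_add_mk]; congr 2 <;> module
    have sum₄₅ (x y z : M) : Q 3 (x, y, z) + Q 4 (x, y, z) =
        ((4 * c) • x, (4 * c) • y, (2 * d) • z) := by
      simp only [hQ₄, hQ₅, Prod.mk_add_mk]; congr 2 <;> module
    refine ContinuousLinearMap.ext fun ⟨x, y, z⟩ => ?_
    calc (∑ i, Q i) (x, y, z)
        = Q 0 (x, y, z) + Q 1 (x, y, z) + Q 2 (x, y, z) + (Q 3 (x, y, z) + Q 4 (x, y, z)) := by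
          simp only [Fin.sum_univ_five, add_apply, add_assoc]
      _ = (lam • x, lam • y, lam • z) := by
          simp only [sum₁₂₃, sum₄₅, Prod.mk_add_mk, ← add_smul, hac, hbd]

end OperatorMatrices

/-- Given a representation `S₁, S₂` of the Cuntz algebra `O₂` on a complex Hilbert
space `H` and `λ ∈ ℂ`, the five explicit operator matrices `Q₁, …, Q₅` on `H ⊕ H ⊕ H`
are idempotents summing to `λ·I`. -/
theorem five_idempotents_from_cuntz
    {H : Type*} [NormedAddCommGroup H] [InnerProductSpace ℂ H] [CompleteSpace H]
    (S₁ S₂ : H →L[ℂ] H)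
    (hS₁ : adjoint S₁ ∘L S₁ = 1)
    (hS₂ : adjoint S₂ ∘L S₂ = 1)
    (hS₁₂ : adjoint S₁ ∘L S₂ = 0)
    (hranges : S₁ ∘L adjoint S₁ + S₂ ∘L adjoint S₂ = 1)
    (lam a b c d : ℂ)
    (ha : a = (5 - 2 * lam) / 6) (hb : b = (4 * lam - 7) / 3)
    (hc : c = (3 * lam - 5) / 4) (hd : d = (7 - 3 * lam) / 2)
    (Q : Fin 5 → (H × H × H) →L[ℂ] (H × H × H))
    (hQ₁ : ∀ x y z : H, Q 0 (x, y, z) =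
      (a • x + (3 * a) • y + b • z, a • x + (3 * a) • y + b • z,
        a • x + (3 * a) • y + b • z))
    (hQ₂ : ∀ x y z : H, Q 1 (x, y, z) =
      (a • x - (3 * a) • y + b • z, -(a • x) + (3 * a) • y - b • z,
        a • x - (3 * a) • y + b • z))
    (hQ₃ : ∀ x y z : H, Q 2 (x, y, z) =
      ((4 * a) • x - (2 * b) • z, 0, -((2 * a) • x) + b • z))
    (hQ₄ : ∀ x y z : H, Q 3 (x, y, z) =
      ((2 * c) • x + (2 * d * c) • (adjoint S₁ z),
        (2 * c) • y + (2 * d * c) • (adjoint S₂ z),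
        S₁ x + S₂ y + d • z))
    (hQ₅ : ∀ x y z : H, Q 4 (x, y, z) =
      ((2 * c) • x - (2 * d * c) • (adjoint S₁ z),
        (2 * c) • y - (2 * d * c) • (adjoint S₂ z),
        -(S₁ x) - S₂ y + d • z)) :
    (∀ i, Q i ∘L Q i = Q i) ∧
    ∑ i, Q i = lam • (1 : (H × H × H) →L[ℂ] (H × H × H)) :=
  five_idempotents_from_cuntz_general (T₁ := adjoint S₁) (T₂ := adjoint S₂) ⟨hS₁, hS₂, hranges⟩
    (by rw [ha, hb]; ring) (by rw [hc, hd]; ring) (by rw [ha, hc]; ring) (by rw [hb, hd]; ring)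
    hQ₁ hQ₂ hQ₃ hQ₄ hQ₅
end

section
/- Let V be the complex vector space of finitely supported functions from ℝ to ℂ, with canonical basis (e_μ)_{μ∈ℝ}. Define linear maps p, r, s on V by p(e_μ) = μ·e_μ, r(e_μ) = (1−μ)·e_{1−μ}, s(e_μ) = −(1+μ)·e_{−1−μ}, and set q₁ = p + r, q₂ = p − r, q₃ = −p + s, q₄ = −p − s. Then qᵢ² = qᵢ for i = 1,2,3,4, q₁ + q₂ + q₃ + q₄ = 0, and q₁ ≠ 0 (indeed q₁(e₀) = e₁). -/
/-!
The relations `pr = r(1 - p)` and `r² = p(1 - p)` give `(p + r)² = p + r`. They are invariant under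
`r ↦ -r`, so `p - r` is idempotent as well. They hold when `p` is diagonal with weights `w` and `r`
is `p` composed with an involution `σ` of the index set that turns the weight `w i` into `1 - w i`.
On the space with basis `e_μ` this applies to `p` and `r`, with `w μ = μ` and `σ μ = 1 - μ`, and to
`-p` and `-s`, with `w μ = -μ` and `σ μ = -1 - μ`. The resulting idempotents `p ± r` and `-p ± s`
add up to zero.
-/

/-- The relations `pr = r(1 - p)` and `r² = p(1 - p)`, which make both `p + r` and `p - r`
idempotent. The relations `ps = s(-1 - p)` and `s² = -p(1 + p)` are those of the pair `(-p, s)`. -/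
structure IsReflectionPair {A : Type*} [Ring A] (p r : A) : Prop where
  mul_eq : p * r = r * (1 - p)
  mul_self_eq : r * r = p * (1 - p)

namespace IsReflectionPair

section Ring

variable {A : Type*} [Ring A] {p r : A}

theorem neg_right (h : IsReflectionPair p r) : IsReflectionPair p (-r) where
  mul_eq := by rw [mul_neg, h.mul_eq, neg_mul]
  mul_self_eq := by rw [neg_mul_neg, h.mul_self_eq]

theorem isIdempotentElem_add (h : IsReflectionPair p r) : IsIdempotentElem (p + r) :=
  calc
    (p + r) * (p + r) = p * p + p * r + r * p + r * r := by noncomm_ring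
    _ = p * p + r * (1 - p) + r * p + p * (1 - p) := by rw [h.mul_eq, h.mul_self_eq]
    _ = p + r := by noncomm_ring

theorem isIdempotentElem_sub (h : IsReflectionPair p r) : IsIdempotentElem (p - r) :=
  sub_eq_add_neg p r ▸ h.neg_right.isIdempotentElem_add

end Ring

theorem of_span_eq_top {K M ι : Type*} [Ring K] [AddCommGroup M] [Module K M] {e : ι → M}
    {w : ι → K} {σ : ι → ι} {p r : Module.End K M}
    (he : Submodule.span K (Set.range e) = ⊤) (hσ : Function.Involutive σ)
    (hw : ∀ i, w (σ i) = 1 - w i) (hp : ∀ i, p (e i) = w i • e i)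
    (hr : ∀ i, r (e i) = w (σ i) • e (σ i)) : IsReflectionPair p r := by
  have one_sub_apply (i : ι) : (1 - p) (e i) = w (σ i) • e i := by
    rw [LinearMap.sub_apply, Module.End.one_apply, hp, hw, sub_smul, one_smul]
  constructor
  · refine LinearMap.ext_on_range he fun i ↦ ?_
    calc
      p (r (e i)) = w (σ i) • w (σ i) • e (σ i) := by rw [hr, map_smul, hp]
      _ = r ((1 - p) (e i)) := by rw [one_sub_apply, map_smul, hr]
  · refine LinearMap.ext_on_range he fun i ↦ ?_
    calc
      r (r (e i)) = w (σ i) • w i • e i := by rw [hr, map_smul, hr, hσ]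
      _ = p ((1 - p) (e i)) := by rw [one_sub_apply, map_smul, hp]

end IsReflectionPair

theorem unbounded_idempotents_zero_sum_general {k K : Type*} [Ring k] [Ring K] [Nontrivial K]
    (φ : k →+* K) (p r s : Module.End K (k →₀ K))
    (hp : ∀ μ, p (Finsupp.single μ 1) = φ μ • Finsupp.single μ 1)
    (hr : ∀ μ, r (Finsupp.single μ 1) = φ (1 - μ) • Finsupp.single (1 - μ) 1)
    (hs : ∀ μ, s (Finsupp.single μ 1) = -φ (1 + μ) • Finsupp.single (-1 - μ) 1) :
    (IsIdempotentElem (p + r) ∧ IsIdempotentElem (p - r) ∧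
      IsIdempotentElem (-p + s) ∧ IsIdempotentElem (-p - s)) ∧
    (p + r) + (p - r) + (-p + s) + (-p - s) = 0 ∧
    p + r ≠ 0 ∧ (p + r) (Finsupp.single 0 1) = Finsupp.single 1 1 := by
  have hspan : Submodule.span K (Set.range fun μ : k ↦ Finsupp.single μ (1 : K)) = ⊤ := by
    simpa using (Finsupp.basisSingleOne (R := K) (ι := k)).span_eq
  have hpr : IsReflectionPair p r :=
    .of_span_eq_top hspan (sub_sub_cancel 1) (by simp) hp hr
  have hps_neg : IsReflectionPair (-p) (-s) :=
    .of_span_eq_top (w := fun μ ↦ φ (-μ)) hspan (sub_sub_cancel (-1))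
      (by simp [add_comm]) (by simp [hp]) (by simp [hs, add_comm])
  have hps : IsReflectionPair (-p) s := neg_neg s ▸ hps_neg.neg_right
  have map_single_zero : (p + r) (Finsupp.single 0 1) = Finsupp.single 1 1 := by simp [hp, hr]
  refine ⟨⟨hpr.isIdempotentElem_add, hpr.isIdempotentElem_sub, hps.isIdempotentElem_add,
    hps.isIdempotentElem_sub⟩, by abel, fun hzero ↦ ?_, map_single_zero⟩
  simp [hzero, eq_comm] at map_single_zero

/-- On the space `ℝ →₀ ℂ` of finitely supported functions with canonical basis
`e_μ = Finsupp.single μ 1`, the operators `p, r, s` acting by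
`p e_μ = μ e_μ`, `r e_μ = (1−μ) e_{1−μ}`, `s e_μ = −(1+μ) e_{−1−μ}` give rise to
idempotents `q₁ = p+r`, `q₂ = p−r`, `q₃ = −p+s`, `q₄ = −p−s` with zero sum and
`q₁ ≠ 0` (indeed `q₁ e₀ = e₁`). -/
theorem unbounded_idempotents_zero_sum
    (p r s : (ℝ →₀ ℂ) →ₗ[ℂ] (ℝ →₀ ℂ))
    (hp : ∀ μ : ℝ, p (Finsupp.single μ 1) = (μ : ℂ) • Finsupp.single μ 1)
    (hr : ∀ μ : ℝ, r (Finsupp.single μ 1) = ((1 - μ : ℝ) : ℂ) • Finsupp.single (1 - μ) 1)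
    (hs : ∀ μ : ℝ, s (Finsupp.single μ 1) = (-(1 + μ : ℝ) : ℂ) • Finsupp.single (-1 - μ) 1)
    (q₁ q₂ q₃ q₄ : (ℝ →₀ ℂ) →ₗ[ℂ] (ℝ →₀ ℂ))
    (h₁ : q₁ = p + r) (h₂ : q₂ = p - r) (h₃ : q₃ = -p + s) (h₄ : q₄ = -p - s) :
    (q₁ ∘ₗ q₁ = q₁ ∧ q₂ ∘ₗ q₂ = q₂ ∧ q₃ ∘ₗ q₃ = q₃ ∧ q₄ ∘ₗ q₄ = q₄) ∧
    q₁ + q₂ + q₃ + q₄ = 0 ∧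
    q₁ ≠ 0 ∧ q₁ (Finsupp.single 0 1) = Finsupp.single 1 1 := by
  subst h₁ h₂ h₃ h₄
  exact unbounded_idempotents_zero_sum_general Complex.ofRealHom p r s hp hr hs
end

section
/- Let A be a complex unital Banach algebra and let q₁, q₂, q₃, q₄ ∈ A be idempotents with q₁ + q₂ + q₃ + q₄ = 0. Then q₁ = q₂ = q₃ = q₄ = 0. In particular, if four bounded linear operators on a complex Hilbert space are idempotent and sum to the zero operator, then each of them is the zero operator. -/
/-!
Put `n = p + q = -(r + s)`, `d = p - q` and `e = r - s`. Then `d n = (2 - n) d`, `e n = (-2 - n) e`,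
`d² = n (2 - n)` and `e² = -n (2 + n)`, so `x = d e` satisfies `x n = (n - 4) x`. In a normed
algebra this forces `x ^ k = 0` for some `k > 0`. On the other hand `x ^ k (e d) ^ k` and
`(e d) ^ k x ^ k` are one and the same polynomial evaluated at `n` and at `-n`; it has a simple root
at `0` and all its other roots are positive. Hence `n` is annihilated by two polynomials, one with
no negative and one with no positive roots, whose greatest common divisor is `X`; that is, `n = 0`.
-/

open Finset Polynomial

section Nilpotent

theorem semiconjBy_pow_sub_natCast_mul {R : Type*} [Ring R] {x a c : R} (hc : Commute x c)
    (h : SemiconjBy x a (a - c)) (k : ℕ) : SemiconjBy (x ^ k) a (a - k * c) := by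
  induction k with
  | zero => simp
  | succ k ih =>
    have hshift : SemiconjBy x (a - k * c) (a - (k + 1 : ℕ) * c) := by
      convert h.sub_right ((k.commute_cast x).mul_right hc) using 1
      push_cast
      noncomm_ring
    exact pow_succ' x k ▸ hshift.mul_left ih

/-- The norm of `a x ^ k - x ^ k a = k c x ^ k` is at most `2 ‖a‖ ‖x ^ k‖`, which is impossible for
large `k` unless `x ^ k = 0`. -/
theorem isNilpotent_of_semiconjBy_sub_algebraMap {𝕜 A : Type*} [RCLike 𝕜] [NormedRing A]
    [NormedAlgebra 𝕜 A] {x a : A} {c : 𝕜} (hc : c ≠ 0)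
    (h : SemiconjBy x a (a - algebraMap 𝕜 A c)) : IsNilpotent x := by
  obtain ⟨k, hk⟩ := exists_nat_gt (2 * ‖a‖ / ‖c‖)
  rw [div_lt_iff₀ (norm_pos_iff.mpr hc)] at hk
  have hcomm : (k * c) • x ^ k = a * x ^ k - x ^ k * a := by
    rw [(semiconjBy_pow_sub_natCast_mul (Algebra.commute_algebraMap_right c x) h k).eq,
      Algebra.smul_def, map_mul, map_natCast]
    noncomm_ring
  have hbound : k * ‖c‖ * ‖x ^ k‖ ≤ 2 * ‖a‖ * ‖x ^ k‖ :=
    calc k * ‖c‖ * ‖x ^ k‖ = ‖a * x ^ k - x ^ k * a‖ := by simp [← hcomm, norm_smul]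
      _ ≤ ‖a‖ * ‖x ^ k‖ + ‖x ^ k‖ * ‖a‖ :=
        (norm_sub_le _ _).trans (add_le_add (norm_mul_le _ _) (norm_mul_le _ _))
      _ = 2 * ‖a‖ * ‖x ^ k‖ := by ring
  refine ⟨k, norm_le_zero_iff.mp ?_⟩
  by_contra! hpos
  exact hk.not_ge (le_of_mul_le_mul_right hbound hpos)

end Nilpotent

section Aeval

theorem semiconjBy_aeval_right {R A : Type*} [CommSemiring R] [Semiring A] [Algebra R A]
    {x a b : A} (h : SemiconjBy x a b) (f : R[X]) : SemiconjBy x (aeval a f) (aeval b f) := by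
  induction f using Polynomial.induction_on' with
  | add f g hf hg => simpa only [map_add] using hf.add_right hg
  | monomial n r =>
    simp only [aeval_monomial]
    exact SemiconjBy.mul_right (Algebra.commute_algebraMap_right r x) (h.pow_right n)

theorem pow_mul_pow_eq_aeval_prod {R A : Type*} [CommRing R] [Ring A] [Algebra R A] {x y a : A}
    {c : R} {f : R[X]} (hx : SemiconjBy x a (a - algebraMap R A c)) (hxy : x * y = aeval a f)
    (k : ℕ) : x ^ k * y ^ k = aeval a (∏ i ∈ range k, f.comp (X - C (i * c))) := by
  induction k with
  | zero => simp
  | succ k ih =>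
    set g := ∏ i ∈ range k, f.comp (X - C (i * c)) with hg
    have hcomp : ∏ i ∈ range k, f.comp (X - C ((i + 1 : ℕ) * c)) = g.comp (X - C c) := by
      rw [hg, Polynomial.prod_comp]
      refine prod_congr rfl fun i _ => ?_
      simp [comp_assoc, add_mul, sub_sub, add_comm]
    calc x ^ (k + 1) * y ^ (k + 1) = x * (x ^ k * y ^ k) * y := by
          rw [pow_succ', pow_succ]; noncomm_ring
      _ = aeval (a - algebraMap R A c) g * (x * y) := by
          rw [ih, (semiconjBy_aeval_right hx g).eq, mul_assoc]
      _ = aeval a (∏ i ∈ range (k + 1), f.comp (X - C (i * c))) := by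
          rw [hxy, prod_range_succ', hcomp, map_mul, aeval_comp]
          simp

theorem eq_zero_of_mul_aeval_eq_zero {R A : Type*} [CommSemiring R] [Semiring A] [Algebra R A]
    {u v : R[X]} (huv : IsCoprime u v) {a b : A} (hu : b * aeval a u = 0)
    (hv : b * aeval a v = 0) : b = 0 := by
  obtain ⟨f, g, hfg⟩ := huv
  calc b = b * aeval a (u * f + v * g) := by rw [mul_comm u, mul_comm v, hfg, map_one, mul_one]
    _ = b * aeval a u * aeval a f + b * aeval a v * aeval a g := by
      rw [map_add, map_mul, map_mul, mul_add, mul_assoc, mul_assoc]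
    _ = 0 := by rw [hu, hv, zero_mul, zero_mul, add_zero]

end Aeval

section EvenRoots

/-- The monic polynomial of degree `2 m` with double roots at the first `m` positive even numbers
`2, 4, …, 2 m`. Being coprime to its reflection in `0`, it separates the positive from the negative
eigenvalues of a sum of two idempotents. -/
noncomputable def sqProdEvenRoots (R : Type*) [CommRing R] (m : ℕ) : R[X] :=
  ∏ j ∈ range m, (X - C (2 * (j + 1 : R))) ^ 2

theorem sqProdEvenRoots_two_mul_succ (R : Type*) [CommRing R] (k : ℕ) :
    sqProdEvenRoots R (2 * (k + 1)) = sqProdEvenRoots R (2 * k) *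
      ((X - C (k * 4 : R) - 2) ^ 2 * (X - C (k * 4 : R) - 4) ^ 2) := by
  rw [mul_add_one, sqProdEvenRoots, prod_range_succ, prod_range_succ, ← sqProdEvenRoots]
  simp only [Nat.cast_mul, Nat.cast_ofNat, Nat.cast_add, Nat.cast_one, map_mul, map_ofNat C,
    map_add, map_natCast, map_one]
  ring

theorem prod_comp_mul_X_sub_C_eq_X_mul_sqProdEvenRoots (R : Type*) [CommRing R] (k : ℕ) :
    (∏ i ∈ range k, (X * (X - 2) ^ 2 * (X - 4) : R[X]).comp (X - C (i * 4 : R))) *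
        (X - C (k * 4 : R)) =
      X * sqProdEvenRoots R (2 * k) := by
  induction k with
  | zero => simp [sqProdEvenRoots]
  | succ k ih =>
    set P := ∏ i ∈ range k, (X * (X - 2) ^ 2 * (X - 4) : R[X]).comp (X - C (i * 4 : R))
    set t : R[X] := X - C (k * 4 : R) with ht
    have ht_succ : X - C ((k + 1 : ℕ) * 4 : R) = t - 4 := by
      rw [ht, Nat.cast_succ, add_one_mul, C_add, map_ofNat C 4, sub_sub]
    calc (∏ i ∈ range (k + 1), (X * (X - 2) ^ 2 * (X - 4) : R[X]).comp (X - C (i * 4 : R))) *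
          (X - C ((k + 1 : ℕ) * 4 : R)) = P * (t * (t - 2) ^ 2 * (t - 4)) * (t - 4) := by
          rw [prod_range_succ, ht_succ]
          simp [P, t]
      _ = P * t * ((t - 2) ^ 2 * (t - 4) ^ 2) := by ring
      _ = X * sqProdEvenRoots R (2 * (k + 1)) := by rw [ih, sqProdEvenRoots_two_mul_succ, mul_assoc]

theorem isCoprime_sqProdEvenRoots_comp_neg_X (K : Type*) [Field K] [CharZero K] (m : ℕ) :
    IsCoprime (sqProdEvenRoots K m) ((sqProdEvenRoots K m).comp (-X)) := by
  rw [sqProdEvenRoots, Polynomial.prod_comp]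
  refine IsCoprime.prod_left fun i _ => IsCoprime.prod_right fun j _ => ?_
  have hne : 2 * (i + 1 : K) - -(2 * (j + 1 : K)) ≠ 0 := by
    rw [sub_neg_eq_add]
    norm_cast
  have hneg : (X - C (2 * (j + 1 : K))).comp (-X) = -(X - C (-(2 * (j + 1 : K)))) := by
    rw [sub_comp, X_comp, C_comp, C_neg]
    ring
  rw [pow_comp, hneg]
  exact (isCoprime_X_sub_C_of_isUnit_sub hne.isUnit).neg_right.pow

theorem eq_zero_of_mul_aeval_sqProdEvenRoots {K A : Type*} [Field K] [CharZero K] [Ring A]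
    [Algebra K A] {a : A} {m : ℕ} (hpos : a * aeval a (sqProdEvenRoots K m) = 0)
    (hneg : -a * aeval (-a) (sqProdEvenRoots K m) = 0) : a = 0 :=
  eq_zero_of_mul_aeval_eq_zero (isCoprime_sqProdEvenRoots_comp_neg_X K m) hpos <| by
    simpa [aeval_comp] using hneg

end EvenRoots

section TwoIdempotents

variable {R : Type*} [Ring R] {p q : R}

theorem sub_mul_sub_self_of_isIdempotentElem (hp : IsIdempotentElem p) (hq : IsIdempotentElem q) :
    (p - q) * (p - q) = (p + q) * (2 - (p + q)) := by
  simp only [mul_sub, sub_mul, mul_add, add_mul, hp.eq, hq.eq, mul_two]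
  abel

theorem semiconjBy_sub_add_of_isIdempotentElem (hp : IsIdempotentElem p)
    (hq : IsIdempotentElem q) : SemiconjBy (p - q) (p + q) (2 - (p + q)) := by
  simp only [SemiconjBy, mul_sub, sub_mul, mul_add, add_mul, hp.eq, hq.eq, two_mul]
  abel

theorem eq_zero_of_isIdempotentElem_of_add_eq_zero [IsAddTorsionFree R] (hp : IsIdempotentElem p)
    (hq : IsIdempotentElem q) (h : p + q = 0) : p = 0 ∧ q = 0 := by
  have hqp : q = -p := (neg_eq_of_add_eq_zero_right h).symm
  have hpp : p = -p := by rw [← hqp, ← hq.eq, hqp, neg_mul_neg, hp.eq]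
  have hp0 : p = 0 := self_eq_neg.mp hpp
  exact ⟨hp0, by rw [hqp, hp0, neg_zero]⟩

end TwoIdempotents

section FourIdempotents

variable {A : Type*} [Ring A] {p q r s : A}

theorem semiconjBy_sub_mul_sub_of_sum_eq_zero (hp : IsIdempotentElem p) (hq : IsIdempotentElem q)
    (hr : IsIdempotentElem r) (hs : IsIdempotentElem s) (hsum : p + q + (r + s) = 0) :
    SemiconjBy ((p - q) * (r - s)) (p + q) (p + q - 4) := by
  have hd : (p - q) * (p + q) = (2 - (p + q)) * (p - q) :=
    semiconjBy_sub_add_of_isIdempotentElem hp hq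
  have he : (r - s) * (r + s) = (2 - (r + s)) * (r - s) :=
    semiconjBy_sub_add_of_isIdempotentElem hr hs
  rw [← neg_eq_of_add_eq_zero_right hsum] at he
  generalize p + q = n, p - q = d, r - s = e at *
  calc d * e * n = -(d * (e * -n)) := by noncomm_ring
    _ = -(2 * d + d * n) * e := by rw [he]; noncomm_ring
    _ = (n - 4) * (d * e) := by rw [hd]; noncomm_ring

theorem sub_mul_sub_mul_sub_mul_sub_of_sum_eq_zero (hp : IsIdempotentElem p)
    (hq : IsIdempotentElem q) (hr : IsIdempotentElem r) (hs : IsIdempotentElem s)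
    (hsum : p + q + (r + s) = 0) :
    (p - q) * (r - s) * ((r - s) * (p - q)) = (p + q) * (p + q - 2) ^ 2 * (p + q - 4) := by
  have hd : (p - q) * (p + q) = (2 - (p + q)) * (p - q) :=
    semiconjBy_sub_add_of_isIdempotentElem hp hq
  have hdd := sub_mul_sub_self_of_isIdempotentElem hp hq
  have hee := sub_mul_sub_self_of_isIdempotentElem hr hs
  rw [← neg_eq_of_add_eq_zero_right hsum] at hee
  generalize p + q = n, p - q = d, r - s = e at *
  calc d * e * (e * d) = d * (e * e) * d := by noncomm_ring
    _ = -(d * n) * (2 + n) * d := by rw [hee]; noncomm_ring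
    _ = -((2 - n) * d) * (2 + n) * d := by rw [hd]
    _ = -(2 - n) * (2 * d + d * n) * d := by noncomm_ring
    _ = -((2 - n) * (4 - n)) * (d * d) := by rw [hd]; noncomm_ring
    _ = n * (n - 2) ^ 2 * (n - 4) := by rw [hdd]; noncomm_ring

theorem add_mul_aeval_sqProdEvenRoots_eq_zero (R : Type*) [CommRing R] [Algebra R A]
    (hp : IsIdempotentElem p) (hq : IsIdempotentElem q) (hr : IsIdempotentElem r)
    (hs : IsIdempotentElem s) (hsum : p + q + (r + s) = 0) {k : ℕ}
    (hk : ((p - q) * (r - s)) ^ k * ((r - s) * (p - q)) ^ k = 0) :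
    (p + q) * aeval (p + q) (sqProdEvenRoots R (2 * k)) = 0 := by
  have hshift : SemiconjBy ((p - q) * (r - s)) (p + q) (p + q - algebraMap R A 4) := by
    simpa only [map_ofNat] using semiconjBy_sub_mul_sub_of_sum_eq_zero hp hq hr hs hsum
  have hprod : (p - q) * (r - s) * ((r - s) * (p - q)) =
      aeval (p + q) (X * (X - 2) ^ 2 * (X - 4) : R[X]) := by
    simpa [map_ofNat] using sub_mul_sub_mul_sub_mul_sub_of_sum_eq_zero hp hq hr hs hsum
  rw [pow_mul_pow_eq_aeval_prod hshift hprod] at hk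
  have hroots := congrArg (aeval (p + q)) (prod_comp_mul_X_sub_C_eq_X_mul_sqProdEvenRoots R k)
  rwa [map_mul, hk, zero_mul, map_mul, aeval_X, eq_comm] at hroots

theorem add_eq_zero_of_isNilpotent_sub_mul_sub (K : Type*) [Field K] [CharZero K] [Algebra K A]
    (hp : IsIdempotentElem p) (hq : IsIdempotentElem q) (hr : IsIdempotentElem r)
    (hs : IsIdempotentElem s) (hsum : p + q + (r + s) = 0)
    (hnil : IsNilpotent ((p - q) * (r - s))) : p + q = 0 := by
  obtain ⟨k, hk⟩ := hnil
  have hpq := add_mul_aeval_sqProdEvenRoots_eq_zero K hp hq hr hs hsum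
    (by rw [hk, zero_mul] : ((p - q) * (r - s)) ^ k * ((r - s) * (p - q)) ^ k = 0)
  have hrs := add_mul_aeval_sqProdEvenRoots_eq_zero K hr hs hp hq (by rwa [add_comm])
    (by rw [hk, mul_zero] : ((r - s) * (p - q)) ^ k * ((p - q) * (r - s)) ^ k = 0)
  rw [← neg_eq_of_add_eq_zero_right hsum] at hrs
  exact eq_zero_of_mul_aeval_sqProdEvenRoots hpq hrs

end FourIdempotents

theorem four_idempotents_sum_zero_banach_general {A : Type*} [NormedRing A] [NormedAlgebra ℝ A]
    {q₁ q₂ q₃ q₄ : A} (h₁ : q₁ ^ 2 = q₁) (h₂ : q₂ ^ 2 = q₂) (h₃ : q₃ ^ 2 = q₃) (h₄ : q₄ ^ 2 = q₄)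
    (hsum : q₁ + q₂ + q₃ + q₄ = 0) : q₁ = 0 ∧ q₂ = 0 ∧ q₃ = 0 ∧ q₄ = 0 := by
  rw [sq] at h₁ h₂ h₃ h₄
  rw [add_assoc] at hsum
  have hnil : IsNilpotent ((q₁ - q₂) * (q₃ - q₄)) := by
    refine isNilpotent_of_semiconjBy_sub_algebraMap (a := q₁ + q₂) (c := (4 : ℝ)) four_ne_zero ?_
    simpa only [map_ofNat] using semiconjBy_sub_mul_sub_of_sum_eq_zero h₁ h₂ h₃ h₄ hsum
  have h₁₂ : q₁ + q₂ = 0 := add_eq_zero_of_isNilpotent_sub_mul_sub ℝ h₁ h₂ h₃ h₄ hsum hnil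
  have h₃₄ : q₃ + q₄ = 0 := by rwa [h₁₂, zero_add] at hsum
  have : IsAddTorsionFree A := .of_isTorsionFree ℝ A
  obtain ⟨hq₁, hq₂⟩ := eq_zero_of_isIdempotentElem_of_add_eq_zero h₁ h₂ h₁₂
  obtain ⟨hq₃, hq₄⟩ := eq_zero_of_isIdempotentElem_of_add_eq_zero h₃ h₄ h₃₄
  exact ⟨hq₁, hq₂, hq₃, hq₄⟩

/-- In a complex unital Banach algebra, four idempotents summing to zero are all
zero. In particular, four bounded idempotent operators on a complex Hilbert space
summing to the zero operator are all zero. -/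
theorem four_idempotents_sum_zero_banach
    {A : Type*} [NormedRing A] [NormedAlgebra ℂ A] [CompleteSpace A]
    (q₁ q₂ q₃ q₄ : A)
    (h₁ : q₁ ^ 2 = q₁) (h₂ : q₂ ^ 2 = q₂) (h₃ : q₃ ^ 2 = q₃) (h₄ : q₄ ^ 2 = q₄)
    (hsum : q₁ + q₂ + q₃ + q₄ = 0) :
    (q₁ = 0 ∧ q₂ = 0 ∧ q₃ = 0 ∧ q₄ = 0) ∧
    ∀ (H : Type) [NormedAddCommGroup H] [InnerProductSpace ℂ H] [CompleteSpace H]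
      (Q₁ Q₂ Q₃ Q₄ : H →L[ℂ] H),
      Q₁ ^ 2 = Q₁ → Q₂ ^ 2 = Q₂ → Q₃ ^ 2 = Q₃ → Q₄ ^ 2 = Q₄ →
      Q₁ + Q₂ + Q₃ + Q₄ = 0 →
      Q₁ = 0 ∧ Q₂ = 0 ∧ Q₃ = 0 ∧ Q₄ = 0 :=
  ⟨four_idempotents_sum_zero_banach_general h₁ h₂ h₃ h₄ hsum,
    fun _ _ _ _ _ _ _ _ => four_idempotents_sum_zero_banach_general⟩
end
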